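/- Let A be a Hopf algebra over a field k and let K be a Hopf algebra in the braided category of left Yetter–Drinfel'd modules over A; that is, K is a left A-Yetter–Drinfel'd module (action a·h, coaction δ(h) = h_{(-1)} ⊗ h_{(0)}) which is a k-algebra and k-coalgebra such that: the unit and counit are A-(co)linear, the multiplication and comultiplication of K are A-linear and A-colinear, Δ_K(hk) = h_{(1)} ((h_{(2)})_{(-1)}·k_{(1)}) ⊗ (h_{(2)})_{(0)} k_{(2)}, ε_K is an algebra map, Δ_K(1) = 1 ⊗ 1, and there is a linear map S_K : K → K with S_K(h_{(1)}) h_{(2)} = ε_K(h) 1 = h_{(1)} S_K(h_{(2)}). Then the vector space K ⊗ A, with multiplication (h⊗a)(k⊗b) = h (a_{(1)}·k) ⊗ a_{(2)} b, unit 1⊗1, comultiplication Δ(h⊗a) = (h_{(1)} ⊗ (h_{(2)})_{(-1)} a_{(1)}) ⊗ ((h_{(2)})_{(0)} ⊗ a_{(2)}), and counit ε_K ⊗ ε_A, is a Hopf algebra over k (the Radford biproduct K ⋊ A): it is a bialgebra and its identity map has a convolution inverse, an antipode. -/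

import Mathlib

open TensorProduct

noncomputable section

variable {k : Type*} [Field k]
variable {A : Type*} [Ring A] [HopfAlgebra k A]
variable {X Y Z : Type*} [AddCommGroup X] [Module k X] [AddCommGroup Y] [Module k Y]
  [AddCommGroup Z] [Module k Z]

/-- LHS of the left Yetter–Drinfel'd compatibility condition, as a linear map
`A ⊗ X → A ⊗ X` sending `h ⊗ x` to `h₍₁₎x₍₋₁₎ ⊗ h₍₂₎ · x₍₀₎`. -/
def ydL (act : A ⊗[k] X →ₗ[k] X) (coact : X →ₗ[k] A ⊗[k] X) :
    A ⊗[k] X →ₗ[k] A ⊗[k] X :=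
  TensorProduct.map (LinearMap.mul' k A) act
    ∘ₗ (TensorProduct.tensorTensorTensorComm k A A A X).toLinearMap
    ∘ₗ TensorProduct.map (Coalgebra.comul (R := k)) coact

/-- RHS of the left Yetter–Drinfel'd compatibility condition, sending `h ⊗ x` to
`(h₍₁₎·x)₍₋₁₎ h₍₂₎ ⊗ (h₍₁₎·x)₍₀₎`. -/
def ydR (act : A ⊗[k] X →ₗ[k] X) (coact : X →ₗ[k] A ⊗[k] X) :
    A ⊗[k] X →ₗ[k] A ⊗[k] X :=
  TensorProduct.map (LinearMap.mul' k A) LinearMap.id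
    ∘ₗ (TensorProduct.assoc k A A X).symm.toLinearMap
    ∘ₗ LinearMap.lTensor A (TensorProduct.comm k X A).toLinearMap
    ∘ₗ (TensorProduct.assoc k A X A).toLinearMap
    ∘ₗ LinearMap.rTensor A coact
    ∘ₗ LinearMap.rTensor A act
    ∘ₗ (TensorProduct.assoc k A X A).symm.toLinearMap
    ∘ₗ LinearMap.lTensor A (TensorProduct.comm k A X).toLinearMap
    ∘ₗ (TensorProduct.assoc k A A X).toLinearMap
    ∘ₗ LinearMap.rTensor X (Coalgebra.comul (R := k))

/-- A left Yetter–Drinfel'd module structure over the Hopf algebra `A` on the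
vector space `X`: a left action, a left coaction, and the compatibility. -/
structure IsYD (act : A ⊗[k] X →ₗ[k] X) (coact : X →ₗ[k] A ⊗[k] X) : Prop where
  act_one : ∀ x : X, act (1 ⊗ₜ[k] x) = x
  act_mul : ∀ (a a' : A) (x : X),
    act ((a * a') ⊗ₜ[k] x) = act (a ⊗ₜ[k] act (a' ⊗ₜ[k] x))
  coassoc : (TensorProduct.assoc k A A X).toLinearMap
      ∘ₗ LinearMap.rTensor X (Coalgebra.comul (R := k)) ∘ₗ coact
      = LinearMap.lTensor A coact ∘ₗ coact
  counit_coact : (TensorProduct.lid k X).toLinearMap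
      ∘ₗ LinearMap.rTensor X (Coalgebra.counit (R := k)) ∘ₗ coact = LinearMap.id
  yd : ydL act coact = ydR act coact

/-- The diagonal action `h · (x ⊗ y) = h₍₁₎·x ⊗ h₍₂₎·y` on a tensor product. -/
def tAct (actX : A ⊗[k] X →ₗ[k] X) (actY : A ⊗[k] Y →ₗ[k] Y) :
    A ⊗[k] (X ⊗[k] Y) →ₗ[k] X ⊗[k] Y :=
  TensorProduct.map actX actY
    ∘ₗ (TensorProduct.tensorTensorTensorComm k A A X Y).toLinearMap
    ∘ₗ LinearMap.rTensor (X ⊗[k] Y) (Coalgebra.comul (R := k))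

/-- The codiagonal coaction `x ⊗ y ↦ x₍₋₁₎y₍₋₁₎ ⊗ (x₍₀₎ ⊗ y₍₀₎)` on a tensor product. -/
def tCoact (coactX : X →ₗ[k] A ⊗[k] X) (coactY : Y →ₗ[k] A ⊗[k] Y) :
    X ⊗[k] Y →ₗ[k] A ⊗[k] (X ⊗[k] Y) :=
  LinearMap.rTensor (X ⊗[k] Y) (LinearMap.mul' k A)
    ∘ₗ (TensorProduct.tensorTensorTensorComm k A X A Y).toLinearMap
    ∘ₗ TensorProduct.map coactX coactY

/-- The Yetter–Drinfel'd braiding `c_{X,Y} : x ⊗ y ↦ x₍₋₁₎ · y ⊗ x₍₀₎`. -/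
def ydBraid (coactX : X →ₗ[k] A ⊗[k] X) (actY : A ⊗[k] Y →ₗ[k] Y) :
    X ⊗[k] Y →ₗ[k] Y ⊗[k] X :=
  LinearMap.rTensor X actY
    ∘ₗ (TensorProduct.assoc k A Y X).symm.toLinearMap
    ∘ₗ LinearMap.lTensor A (TensorProduct.comm k X Y).toLinearMap
    ∘ₗ (TensorProduct.assoc k A X Y).toLinearMap
    ∘ₗ LinearMap.rTensor Y coactX

/-- The map `θ_X : x ↦ S(x₍₋₁₎) · x₍₀₎`. -/
def ydTheta (act : A ⊗[k] X →ₗ[k] X) (coact : X →ₗ[k] A ⊗[k] X) : X →ₗ[k] X :=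
  act ∘ₗ LinearMap.rTensor X (HopfAlgebra.antipode (R := k)) ∘ₗ coact

section Biproduct

variable {K : Type*} [Ring K] [Algebra k K]

/-- The multiplication `(h⊗a)(k⊗b) = h (a₍₁₎·k) ⊗ a₍₂₎b` of the Radford biproduct
`K ⋊ A`. -/
def biMul (actK : A ⊗[k] K →ₗ[k] K) :
    (K ⊗[k] A) ⊗[k] (K ⊗[k] A) →ₗ[k] K ⊗[k] A :=
  TensorProduct.map
      (LinearMap.mul' k K ∘ₗ LinearMap.lTensor K actK
        ∘ₗ (TensorProduct.assoc k K A K).toLinearMap)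
      (LinearMap.mul' k A)
    ∘ₗ (TensorProduct.tensorTensorTensorComm k (K ⊗[k] A) A K A).toLinearMap
    ∘ₗ LinearMap.rTensor (K ⊗[k] A) (TensorProduct.assoc k K A A).symm.toLinearMap
    ∘ₗ LinearMap.rTensor (K ⊗[k] A) (LinearMap.lTensor K (Coalgebra.comul (R := k)))

/-- The comultiplication `Δ(h⊗a) = (h₍₁₎ ⊗ (h₍₂₎)₍₋₁₎a₍₁₎) ⊗ ((h₍₂₎)₍₀₎ ⊗ a₍₂₎)` of
the Radford biproduct `K ⋊ A`. -/
def biComul (comulK : K →ₗ[k] K ⊗[k] K) (coactK : K →ₗ[k] A ⊗[k] K) :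
    K ⊗[k] A →ₗ[k] (K ⊗[k] A) ⊗[k] (K ⊗[k] A) :=
  LinearMap.rTensor (K ⊗[k] A)
      (LinearMap.lTensor K (LinearMap.mul' k A) ∘ₗ (TensorProduct.assoc k K A A).toLinearMap)
    ∘ₗ (TensorProduct.tensorTensorTensorComm k (K ⊗[k] A) K A A).toLinearMap
    ∘ₗ LinearMap.rTensor (A ⊗[k] A) (TensorProduct.assoc k K A K).symm.toLinearMap
    ∘ₗ LinearMap.rTensor (A ⊗[k] A) (LinearMap.lTensor K coactK)
    ∘ₗ TensorProduct.map comulK (Coalgebra.comul (R := k))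

/-- The counit `ε_K ⊗ ε_A` of the Radford biproduct `K ⋊ A`. -/
def biCounit (counitK : K →ₗ[k] k) : K ⊗[k] A →ₗ[k] k :=
  LinearMap.mul' k k ∘ₗ TensorProduct.map counitK (Coalgebra.counit (R := k))

namespace Radford

open LinearMap in
/-- `a ⊗ x ↦ a₍₁₎ · x ⊗ a₍₂₎`. -/
def tau (actK : A ⊗[k] K →ₗ[k] K) : A ⊗[k] K →ₗ[k] K ⊗[k] A :=
  LinearMap.rTensor A actK
    ∘ₗ (TensorProduct.assoc k A K A).symm.toLinearMap
    ∘ₗ LinearMap.lTensor A (TensorProduct.comm k A K).toLinearMap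
    ∘ₗ (TensorProduct.assoc k A A K).toLinearMap
    ∘ₗ LinearMap.rTensor K (Coalgebra.comul (R := k))

/-- `a ↦ a · x`. -/
def actr (actK : A ⊗[k] K →ₗ[k] K) (x : K) : A →ₗ[k] K :=
  actK ∘ₗ (TensorProduct.mk k A K).flip x

@[simp] lemma actr_apply (actK : A ⊗[k] K →ₗ[k] K) (x : K) (a : A) :
    actr actK x a = actK (a ⊗ₜ x) := rfl

lemma tau_tmul (actK : A ⊗[k] K →ₗ[k] K) (a : A) (x : K) :
    tau actK (a ⊗ₜ x) = LinearMap.rTensor A (actr actK x) (Coalgebra.comul (R := k) a) := by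
  simp only [tau, LinearMap.comp_apply, LinearMap.rTensor_tmul, LinearEquiv.coe_coe]
  generalize (Coalgebra.comul (R := k) a) = t
  induction t using TensorProduct.induction_on with
  | zero => simp
  | tmul y z => simp
  | add y z hy hz => simp only [add_tmul, map_add, hy, hz]

lemma biMul_tmul (actK : A ⊗[k] K →ₗ[k] K) (h x : K) (a b : A) :
    biMul actK ((h ⊗ₜ a) ⊗ₜ (x ⊗ₜ b)) = (h ⊗ₜ[k] (1 : A)) * tau actK (a ⊗ₜ x) * ((1 : K) ⊗ₜ b) := by
  rw [tau_tmul]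
  simp only [biMul, LinearMap.comp_apply, LinearMap.rTensor_tmul, LinearEquiv.coe_coe,
    LinearMap.lTensor_tmul]
  generalize (Coalgebra.comul (R := k) a) = t
  induction t using TensorProduct.induction_on with
  | zero => simp
  | tmul y z => simp
  | add y z hy hz => simp only [add_tmul, tmul_add, map_add, hy, hz, mul_add, add_mul]

section Lift

variable {C : Type*} [Ring C] [Algebra k C]

/-- `h ⊗ a ↦ f h * g a`. -/
def Phi (f : K →ₗ[k] C) (g : A →ₗ[k] C) : K ⊗[k] A →ₗ[k] C :=
  LinearMap.mul' k C ∘ₗ TensorProduct.map f g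

@[simp] lemma Phi_tmul (f : K →ₗ[k] C) (g : A →ₗ[k] C) (h : K) (a : A) :
    Phi f g (h ⊗ₜ a) = f h * g a := by simp [Phi]

lemma Phi_mul (actK : A ⊗[k] K →ₗ[k] K) (f : K →ₗ[k] C) (g : A →ₗ[k] C)
    (hf : ∀ x y, f (x * y) = f x * f y) (hg : ∀ x y, g (x * y) = g x * g y)
    (hc : ∀ a x, g a * f x = Phi f g (tau actK (a ⊗ₜ x))) (u v : K ⊗[k] A) :
    Phi f g (biMul actK (u ⊗ₜ v)) = Phi f g u * Phi f g v := by
  have key : ∀ (h : K) (b : A) (t : K ⊗[k] A),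
      Phi f g ((h ⊗ₜ[k] (1 : A)) * t * ((1 : K) ⊗ₜ b)) = f h * Phi f g t * g b := by
    intro h b t
    induction t using TensorProduct.induction_on with
    | zero => simp
    | tmul y z => simp [hf, hg, mul_assoc]
    | add y z hy hz => simp only [map_add, hy, hz, mul_add, add_mul]
  induction u using TensorProduct.induction_on with
  | zero => simp
  | add y z hy hz => simp only [map_add, add_tmul, hy, hz, add_mul]
  | tmul h a =>
    induction v using TensorProduct.induction_on with
    | zero => simp
    | add y z hy hz => simp only [map_add, tmul_add, hy, hz, mul_add]
    | tmul x b =>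
      rw [biMul_tmul, key, ← hc]
      simp [mul_assoc]

end Lift

/-- `K` is a left `A`-module algebra. -/
structure IsModAlg (actK : A ⊗[k] K →ₗ[k] K) : Prop where
  act_one : ∀ x : K, actK (1 ⊗ₜ[k] x) = x
  act_mul : ∀ (a a' : A) (x : K),
    actK ((a * a') ⊗ₜ[k] x) = actK (a ⊗ₜ[k] actK (a' ⊗ₜ[k] x))
  unit_act : ∀ a : A, actK (a ⊗ₜ[k] (1 : K)) = Coalgebra.counit (R := k) a • (1 : K)
  mul_act : actK ∘ₗ LinearMap.lTensor A (LinearMap.mul' k K)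
        = LinearMap.mul' k K ∘ₗ tAct actK actK

variable {actK : A ⊗[k] K →ₗ[k] K}

lemma IsModAlg.mul_act' (H : IsModAlg actK) (a : A) (x y : K) :
    actK (a ⊗ₜ (x * y)) = LinearMap.mul' k K
      (TensorProduct.map (actr actK x) (actr actK y) (Coalgebra.comul (R := k) a)) := by
  have := LinearMap.congr_fun H.mul_act (a ⊗ₜ (x ⊗ₜ y))
  simp only [tAct, LinearMap.comp_apply, LinearMap.lTensor_tmul, LinearMap.mul'_apply,
    LinearMap.rTensor_tmul, LinearEquiv.coe_coe] at this
  rw [this]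
  congr 1
  generalize (Coalgebra.comul (R := k) a) = t
  induction t using TensorProduct.induction_on with
  | zero => simp
  | tmul y z => simp
  | add y z hy hz => simp only [add_tmul, map_add, hy, hz]

/-- The representation of `A` on `K`. -/
def rhoK (H : IsModAlg actK) : A →ₐ[k] Module.End k K :=
  AlgHom.ofLinearMap (TensorProduct.curry actK)
    (by ext x; simp [H.act_one]) (by intro a b; ext x; simp [H.act_mul])

@[simp] lemma rhoK_apply (H : IsModAlg actK) (a : A) (x : K) :
    rhoK H a x = actK (a ⊗ₜ x) := rfl

/-- The representation of `A` on `K ⊗ A`. -/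
def rho (H : IsModAlg actK) : A →ₐ[k] Module.End k (K ⊗[k] A) :=
  (Module.endTensorEndAlgHom (R := k) (A := k) (M := K) (N := A)).comp
    ((Algebra.TensorProduct.map (rhoK H) (Algebra.lmul k A)).comp (Bialgebra.comulAlgHom k A))

/-- `K` acts on `K ⊗ A`. -/
def lamK : K →ₐ[k] Module.End k (K ⊗[k] A) :=
  (Module.End.rTensorAlgHom k K A).comp (Algebra.lmul k K)

@[simp] lemma lamK_tmul (x y : K) (a : A) :
    lamK (k := k) x (y ⊗ₜ[k] a) = (x * y) ⊗ₜ a := by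
  rfl

lemma rho_tmul (H : IsModAlg actK) (a : A) (y : K) (b : A) :
    rho H a (y ⊗ₜ b) = TensorProduct.map (actr actK y) (LinearMap.mulRight k b)
      (Coalgebra.comul (R := k) a) := by
  simp only [rho, AlgHom.comp_apply, Bialgebra.comulAlgHom_apply]
  generalize (Coalgebra.comul (R := k) a) = t
  induction t using TensorProduct.induction_on with
  | zero => simp
  | tmul y z => simp [Module.endTensorEndAlgHom]
  | add y z hy hz => simp only [map_add, hy, hz, LinearMap.add_apply]

lemma rho_cross (H : IsModAlg actK) (a : A) (x : K) :
    rho H a * lamK x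
      = Phi (lamK (k := k) (A := A) (K := K)).toLinearMap (rho H).toLinearMap
          (tau actK (a ⊗ₜ x)) := by
  apply TensorProduct.ext'
  intro y b
  rw [Module.End.mul_apply, lamK_tmul, rho_tmul, tau_tmul]
  let V : A ⊗[k] (A ⊗[k] A) →ₗ[k] K ⊗[k] A :=
    TensorProduct.map (LinearMap.mul' k K) LinearMap.id
    ∘ₗ (TensorProduct.assoc k K K A).symm.toLinearMap
    ∘ₗ TensorProduct.map (actr actK x)
        (TensorProduct.map (actr actK y) (LinearMap.mulRight k b))
  have h1 : ∀ t : A ⊗[k] A, TensorProduct.map (actr actK (x * y)) (LinearMap.mulRight k b) t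
      = V (TensorProduct.assoc k A A A (LinearMap.rTensor A (Coalgebra.comul (R := k)) t)) := by
    intro t
    induction t using TensorProduct.induction_on with
    | zero => simp
    | add y z hy hz => simp only [map_add, hy, hz]
    | tmul c d =>
      rw [TensorProduct.map_tmul, actr_apply, H.mul_act', LinearMap.rTensor_tmul]
      generalize (Coalgebra.comul (R := k) c) = t
      induction t using TensorProduct.induction_on with
      | zero => simp
      | tmul y z => simp [V]
      | add y z hy hz => simp only [add_tmul, map_add, hy, hz]
  have h2 : ∀ t : A ⊗[k] A, (Phi (lamK (k := k) (A := A) (K := K)).toLinearMap (rho H).toLinearMap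
          (LinearMap.rTensor A (actr actK x) t)) (y ⊗ₜ b)
      = V (LinearMap.lTensor A (Coalgebra.comul (R := k)) t) := by
    intro t
    induction t using TensorProduct.induction_on with
    | zero => simp
    | add y z hy hz => simp only [map_add, hy, hz, LinearMap.add_apply]
    | tmul c d =>
      simp only [LinearMap.rTensor_tmul, Phi_tmul, AlgHom.toLinearMap_apply, Module.End.mul_apply,
        rho_tmul, LinearMap.lTensor_tmul]
      generalize (Coalgebra.comul (R := k) d) = t
      induction t using TensorProduct.induction_on with
      | zero => simp
      | tmul y z => simp [V]
      | add y z hy hz => simp only [tmul_add, map_add, hy, hz]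
  rw [h1, h2, Coalgebra.coassoc_apply]

lemma Phi_eq_biMul (H : IsModAlg actK) (u v : K ⊗[k] A) :
    Phi (lamK (k := k) (A := A) (K := K)).toLinearMap (rho H).toLinearMap u v
      = biMul actK (u ⊗ₜ v) := by
  induction u using TensorProduct.induction_on with
  | zero => simp
  | add y z hy hz => simp only [map_add, add_tmul, hy, hz, LinearMap.add_apply]
  | tmul h a =>
    induction v using TensorProduct.induction_on with
    | zero => simp
    | add y z hy hz => simp only [map_add, tmul_add, hy, hz]
    | tmul x b =>
      simp only [Phi_tmul, AlgHom.toLinearMap_apply, Module.End.mul_apply, rho_tmul,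
        biMul_tmul, tau_tmul]
      generalize (Coalgebra.comul (R := k) a) = t
      induction t using TensorProduct.induction_on with
      | zero => simp
      | tmul y z => simp
      | add y z hy hz => simp only [map_add, hy, hz, mul_add, add_mul]

lemma biMul_assoc (H : IsModAlg actK) (u v w : K ⊗[k] A) :
    biMul actK (biMul actK (u ⊗ₜ v) ⊗ₜ w) = biMul actK (u ⊗ₜ biMul actK (v ⊗ₜ w)) := by
  rw [← Phi_eq_biMul H (biMul actK _), Phi_mul (actK := actK) _ _ (by simp) (by simp)
    (fun a x => by simpa using rho_cross H a x)]
  simp [Phi_eq_biMul]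

lemma tau_one_left (H : IsModAlg actK) (x : K) : tau actK (1 ⊗ₜ x) = x ⊗ₜ 1 := by
  simp [tau_tmul, Algebra.TensorProduct.one_def, H.act_one]

lemma tau_one_right (H : IsModAlg actK) (a : A) : tau actK (a ⊗ₜ 1) = 1 ⊗ₜ a := by
  have h : actr actK 1 = (LinearMap.toSpanSingleton k K 1) ∘ₗ (Coalgebra.counit (R := k)) := by
    ext a; simp [H.unit_act]
  rw [tau_tmul, h, LinearMap.rTensor_comp_apply, Coalgebra.rTensor_counit_comul]
  simp

lemma biMul_one_left (H : IsModAlg actK) (u : K ⊗[k] A) :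
    biMul actK ((1 ⊗ₜ 1) ⊗ₜ u) = u := by
  induction u using TensorProduct.induction_on with
  | zero => simp
  | add y z hy hz => simp only [map_add, tmul_add, hy, hz]
  | tmul h a => simp [biMul_tmul, tau_one_left H]

lemma biMul_one_right (H : IsModAlg actK) (u : K ⊗[k] A) :
    biMul actK (u ⊗ₜ (1 ⊗ₜ 1)) = u := by
  induction u using TensorProduct.induction_on with
  | zero => simp
  | add y z hy hz => simp only [map_add, add_tmul, hy, hz]
  | tmul h a => simp [biMul_tmul, tau_one_right H]

/-- The smash product, as a type. -/
def Bi (_ : IsModAlg actK) : Type _ := K ⊗[k] A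

variable (H : IsModAlg actK)

/-- The additive group underlying the smash product. -/
@[reducible] def Bi.addCommGroup : AddCommGroup (Bi H) := inferInstanceAs (AddCommGroup (K ⊗[k] A))

instance : Ring (Bi H) :=
  { Bi.addCommGroup H with
    mul := fun u v => biMul actK (u ⊗ₜ v)
    one := (1 : K) ⊗ₜ[k] (1 : A)
    mul_assoc := biMul_assoc H
    one_mul := biMul_one_left H
    mul_one := biMul_one_right H
    left_distrib := fun u v w => by
      change biMul actK (_ ⊗ₜ (_ + _)) = biMul actK _ + biMul actK _
      rw [← map_add]; exact congrArg _ (tmul_add _ _ _)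
    right_distrib := fun u v w => by
      change biMul actK ((_ + _) ⊗ₜ _) = biMul actK _ + biMul actK _
      rw [← map_add]; exact congrArg _ (add_tmul _ _ _)
    zero_mul := fun u => by
      exact (congrArg (biMul actK) (zero_tmul _ _)).trans (map_zero _)
    mul_zero := fun u => by
      exact (congrArg (biMul actK) (tmul_zero _ _)).trans (map_zero _) }

lemma Bi.mul_def (u v : Bi H) : u * v = (biMul actK (u ⊗ₜ v) : K ⊗[k] A) := rfl
lemma Bi.one_def : (1 : Bi H) = ((1 : K) ⊗ₜ[k] (1 : A) : K ⊗[k] A) := rfl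

/-- The vector space underlying the smash product. -/
@[reducible] def Bi.module : Module k (Bi H) := inferInstanceAs (Module k (K ⊗[k] A))

instance : Algebra k (Bi H) := @Algebra.ofModule k (Bi H) _ _ (Bi.module H)
  (fun r u v => by
    change biMul actK ((r • _) ⊗ₜ _) = r • biMul actK _
    rw [← map_smul]; exact congrArg _ (smul_tmul' _ _ _).symm)
  (fun r u v => by
    change biMul actK (_ ⊗ₜ (r • _)) = r • biMul actK _
    rw [← map_smul]; exact congrArg _ (tmul_smul _ _ _))


/-- The identification of `K ⊗ A` with the smash product. -/
def toB : K ⊗[k] A ≃ₗ[k] Bi H := LinearEquiv.refl k (K ⊗[k] A)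

lemma toB_biMul (u v : K ⊗[k] A) : toB H (biMul actK (u ⊗ₜ v)) = toB H u * toB H v := rfl

lemma toB_one : toB H (1 ⊗ₜ 1) = 1 := rfl

/-- The embedding of `K`. -/
def iK : K →ₐ[k] Bi H :=
  AlgHom.ofLinearMap ((toB H).toLinearMap ∘ₗ (TensorProduct.mk k K A).flip 1)
    (toB_one H) (by
      intro x y
      simp only [LinearMap.comp_apply, LinearMap.flip_apply, TensorProduct.mk_apply,
        LinearEquiv.coe_coe]
      rw [← toB_biMul, biMul_tmul, tau_one_left H]
      simp)

/-- The embedding of `A`. -/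
def jA : A →ₐ[k] Bi H :=
  AlgHom.ofLinearMap ((toB H).toLinearMap ∘ₗ TensorProduct.mk k K A 1)
    (toB_one H) (by
      intro x y
      simp only [LinearMap.comp_apply, TensorProduct.mk_apply,
        LinearEquiv.coe_coe]
      rw [← toB_biMul, biMul_tmul, tau_one_right H]
      simp)

lemma iK_apply (x : K) : iK H x = toB H (x ⊗ₜ 1) := rfl
lemma jA_apply (a : A) : jA H a = toB H (1 ⊗ₜ a) := rfl

lemma iK_mul_jA (x : K) (a : A) : iK H x * jA H a = toB H (x ⊗ₜ a) := by
  rw [iK_apply, jA_apply, ← toB_biMul, biMul_tmul, tau_one_left H]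
  simp

lemma jA_mul_iK (a : A) (x : K) : jA H a * iK H x = toB H (tau actK (a ⊗ₜ x)) := by
  rw [iK_apply, jA_apply, ← toB_biMul, biMul_tmul]
  simp [← Algebra.TensorProduct.one_def]

lemma Phi_ij (u : K ⊗[k] A) : Phi (iK H).toLinearMap (jA H).toLinearMap u = toB H u := by
  induction u using TensorProduct.induction_on with
  | zero => simp
  | add y z hy hz => simp only [map_add, hy, hz]
  | tmul x a => simp [iK_mul_jA]

section LiftB
variable {C : Type*} [Ring C] [Algebra k C]

lemma Bi.lin_ext {M : Type*} [AddCommGroup M] [Module k M] {f g : Bi H →ₗ[k] M}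
    (h : ∀ x a, f (iK H x * jA H a) = g (iK H x * jA H a)) : f = g := by
  have : f ∘ₗ (toB H).toLinearMap = g ∘ₗ (toB H).toLinearMap := by
    apply TensorProduct.ext'
    intro x a
    simpa [iK_mul_jA] using h x a
  ext u
  exact LinearMap.congr_fun this ((toB H).symm u)

lemma Bi.alg_ext {f g : Bi H →ₐ[k] C} (hi : ∀ x, f (iK H x) = g (iK H x))
    (hj : ∀ a, f (jA H a) = g (jA H a)) : f = g := by
  apply AlgHom.toLinearMap_injective
  apply Bi.lin_ext
  intro x a
  simp [hi, hj]

/-- Universal property of the smash product. -/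
def liftB (f : K →ₐ[k] C) (g : A →ₐ[k] C)
    (hc : ∀ a x, g a * f x = Phi f.toLinearMap g.toLinearMap (tau actK (a ⊗ₜ x))) :
    Bi H →ₐ[k] C :=
  AlgHom.ofLinearMap (Phi f.toLinearMap g.toLinearMap ∘ₗ (toB H).symm.toLinearMap)
    (by
      change Phi f.toLinearMap g.toLinearMap (1 ⊗ₜ 1) = 1
      simp) (by
      intro u v
      exact Phi_mul actK f.toLinearMap g.toLinearMap (by simp) (by simp) hc _ _)

lemma liftB_toB (f : K →ₐ[k] C) (g : A →ₐ[k] C) (hc) (u : K ⊗[k] A) :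
    liftB H f g hc (toB H u) = Phi f.toLinearMap g.toLinearMap u := rfl

end LiftB

variable (coactK : K →ₗ[k] A ⊗[k] K) (comulK : K →ₗ[k] K ⊗[k] K) (counitK : K →ₗ[k] k)

/-- The comultiplication as a map on `Bi`. -/
def comulB : Bi H →ₗ[k] Bi H ⊗[k] Bi H := biComul comulK coactK

/-- The counit as a map on `Bi`. -/
def counitB : Bi H →ₗ[k] k := biCounit counitK

lemma comulB_toB (u : K ⊗[k] A) : comulB H coactK comulK (toB H u)
    = TensorProduct.map (toB H).toLinearMap (toB H).toLinearMap (biComul comulK coactK u) := by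
  have : TensorProduct.map (toB H).toLinearMap (toB H).toLinearMap
    = LinearMap.id (R := k) (M := (K ⊗[k] A) ⊗[k] (K ⊗[k] A)) := TensorProduct.map_id
  exact (LinearMap.congr_fun this (biComul comulK coactK u)).symm

lemma counitB_toB (x : K) (a : A) : counitB H counitK (toB H (x ⊗ₜ a))
    = counitK x * Coalgebra.counit (R := k) a := by
  change biCounit counitK (x ⊗ₜ a) = _
  simp [biCounit]

/-- `y ↦ j (y₍₋₁₎) ⊗ i (y₍₀₎)`. -/
def F1 : K →ₗ[k] Bi H ⊗[k] Bi H :=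
  TensorProduct.map (jA H).toLinearMap (iK H).toLinearMap ∘ₗ coactK

/-- `x ⊗ y ↦ (i x ⊗ 1) F1 y`. -/
def F2 : K ⊗[k] K →ₗ[k] Bi H ⊗[k] Bi H :=
  LinearMap.mul' k _ ∘ₗ TensorProduct.map
    ((TensorProduct.mk k (Bi H) (Bi H)).flip 1 ∘ₗ (iK H).toLinearMap) (F1 H coactK)

@[simp] lemma F2_tmul (x y : K) : F2 H coactK (x ⊗ₜ y) = (iK H x ⊗ₜ 1) * F1 H coactK y := by
  simp [F2]

/-- The comultiplication restricted to `A`. -/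
def gA : A →ₐ[k] Bi H ⊗[k] Bi H :=
  (Algebra.TensorProduct.map (jA H) (jA H)).comp (Bialgebra.comulAlgHom k A)

lemma gA_apply (a : A) : gA H a
    = TensorProduct.map (jA H).toLinearMap (jA H).toLinearMap (Coalgebra.comul (R := k) a) := rfl

lemma comulB_tmul (x : K) (a : A) : comulB H coactK comulK (toB H (x ⊗ₜ a))
    = F2 H coactK (comulK x) * gA H a := by
  rw [comulB_toB, gA_apply]
  simp only [biComul, LinearMap.comp_apply, TensorProduct.map_tmul]
  generalize (Coalgebra.comul (R := k) a) = s
  generalize comulK x = t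
  induction t using TensorProduct.induction_on with
  | zero => simp
  | add y z hy hz => simp only [map_add, add_tmul, add_mul, hy, hz]
  | tmul y z =>
    induction s using TensorProduct.induction_on with
    | zero => simp
    | add y z hy hz => simp only [map_add, tmul_add, mul_add, hy, hz]
    | tmul c d =>
      simp only [LinearMap.rTensor_tmul, LinearMap.lTensor_tmul, F2_tmul, F1, LinearMap.comp_apply]
      generalize coactK z = w
      induction w using TensorProduct.induction_on with
      | zero => simp
      | add y z hy hz => simp only [map_add, tmul_add, add_tmul, mul_add, add_mul, hy, hz]
      | tmul e z => simp [← iK_mul_jA, mul_assoc]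


/-- All hypotheses (apart from the antipode) on `K`. -/
structure Hyps (actK : A ⊗[k] K →ₗ[k] K) (coactK : K →ₗ[k] A ⊗[k] K)
    (comulK : K →ₗ[k] K ⊗[k] K) (counitK : K →ₗ[k] k) : Prop where
  hYD : IsYD actK coactK
  hcoassoc : (TensorProduct.assoc k K K K).toLinearMap
        ∘ₗ LinearMap.rTensor K comulK ∘ₗ comulK = LinearMap.lTensor K comulK ∘ₗ comulK
  hcounit₁ : (TensorProduct.lid k K).toLinearMap
        ∘ₗ LinearMap.rTensor K counitK ∘ₗ comulK = LinearMap.id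
  hcounit₂ : (TensorProduct.rid k K).toLinearMap
        ∘ₗ LinearMap.lTensor K counitK ∘ₗ comulK = LinearMap.id
  hunit_coact : coactK 1 = (1 : A) ⊗ₜ[k] (1 : K)
  hcounit_act : ∀ (a : A) (h : K),
      counitK (actK (a ⊗ₜ[k] h)) = Coalgebra.counit (R := k) a * counitK h
  hcounit_coact : ∀ h : K,
      (TensorProduct.rid k A) (LinearMap.lTensor A counitK (coactK h))
        = counitK h • (1 : A)
  hmul_coact : coactK ∘ₗ LinearMap.mul' k K
        = LinearMap.lTensor A (LinearMap.mul' k K) ∘ₗ tCoact coactK coactK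
  hcomul_act : comulK ∘ₗ actK = tAct actK actK ∘ₗ LinearMap.lTensor A comulK
  hcomul_coact : LinearMap.lTensor A comulK ∘ₗ coactK = tCoact coactK coactK ∘ₗ comulK
  hbraided : comulK ∘ₗ LinearMap.mul' k K
        = LinearMap.lTensor K (LinearMap.mul' k K)
          ∘ₗ (TensorProduct.assoc k K K K).toLinearMap
          ∘ₗ LinearMap.rTensor K (LinearMap.rTensor K (LinearMap.mul' k K))
          ∘ₗ LinearMap.rTensor K (TensorProduct.assoc k K K K).symm.toLinearMap
          ∘ₗ LinearMap.rTensor K (LinearMap.lTensor K (ydBraid coactK actK))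
          ∘ₗ LinearMap.rTensor K (TensorProduct.assoc k K K K).toLinearMap
          ∘ₗ (TensorProduct.assoc k (K ⊗[k] K) K K).symm.toLinearMap
          ∘ₗ TensorProduct.map comulK comulK
  hcounit_mul : ∀ h h' : K, counitK (h * h') = counitK h * counitK h'
  hcounit_one : counitK 1 = 1
  hcomul_one : comulK 1 = (1 : K) ⊗ₜ[k] (1 : K)

variable {coactK comulK counitK}

lemma Hyps.coact_mul (hy : Hyps actK coactK comulK counitK) (x y : K) :
    coactK (x * y) = coactK x * coactK y := by
  have := LinearMap.congr_fun hy.hmul_coact (x ⊗ₜ y)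
  simp only [tCoact, LinearMap.comp_apply, LinearMap.mul'_apply, TensorProduct.map_tmul,
    LinearEquiv.coe_coe] at this
  rw [this]
  generalize coactK x = t
  generalize coactK y = s
  induction t using TensorProduct.induction_on with
  | zero => simp
  | add y z hy hz => simp only [map_add, add_tmul, add_mul, hy, hz]
  | tmul y z =>
    induction s using TensorProduct.induction_on with
    | zero => simp
    | add y z hy hz => simp only [map_add, tmul_add, mul_add, hy, hz]
    | tmul c d => simp

lemma F1_mul (hy : Hyps actK coactK comulK counitK) (x y : K) :
    F1 H coactK (x * y) = F1 H coactK x * F1 H coactK y := by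
  have := map_mul (Algebra.TensorProduct.map (jA H) (iK H)) (coactK x) (coactK y)
  rw [← hy.coact_mul] at this
  exact this

lemma F1_one (hy : Hyps actK coactK comulK counitK) : F1 H coactK 1 = 1 := by
  simp [F1, hy.hunit_coact, Algebra.TensorProduct.one_def]

section Zgen
variable {W : Type*} [AddCommGroup W] [Module k W]

/-- `a ⊗ (b ⊗ w) ↦ i (a · x) j b ⊗ ℓ w`. -/
def Zgen (x : K) (l : W →ₗ[k] Bi H) : A ⊗[k] (A ⊗[k] W) →ₗ[k] Bi H ⊗[k] Bi H :=
  TensorProduct.map (toB H).toLinearMap l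
    ∘ₗ (TensorProduct.assoc k K A W).symm.toLinearMap
    ∘ₗ TensorProduct.map (actr actK x) LinearMap.id

lemma Zgen_left (x : K) (l : W →ₗ[k] Bi H) (t : A ⊗[k] W) :
    TensorProduct.map (jA H).toLinearMap l t * (iK H x ⊗ₜ 1)
      = Zgen H x l (TensorProduct.assoc k A A W
          (LinearMap.rTensor W (Coalgebra.comul (R := k)) t)) := by
  induction t using TensorProduct.induction_on with
  | zero => simp
  | add y z hy hz => simp only [map_add, add_mul, hy, hz]
  | tmul a w =>
    simp only [TensorProduct.map_tmul, LinearMap.rTensor_tmul, AlgHom.toLinearMap_apply,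
      Algebra.TensorProduct.tmul_mul_tmul, jA_mul_iK, tau_tmul, mul_one]
    generalize (Coalgebra.comul (R := k) a) = t
    induction t using TensorProduct.induction_on with
    | zero => simp
    | add y z hy hz => simp only [map_add, add_tmul, hy, hz]
    | tmul a w => simp [Zgen]

lemma Zgen_right (x : K) (l : W →ₗ[k] Bi H) (a : A) (t : A ⊗[k] W) :
    Zgen H x l (a ⊗ₜ t)
      = (iK H (actK (a ⊗ₜ x)) ⊗ₜ 1) * TensorProduct.map (jA H).toLinearMap l t := by
  induction t using TensorProduct.induction_on with
  | zero => simp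
  | add y z hy hz => simp only [map_add, mul_add, tmul_add, hy, hz]
  | tmul a w => simp [Zgen, iK_mul_jA]
end Zgen

lemma Hyps.coact_coassoc (hy : Hyps actK coactK comulK counitK) (y : K) :
    TensorProduct.assoc k A A K (LinearMap.rTensor K (Coalgebra.comul (R := k)) (coactK y))
      = LinearMap.lTensor A coactK (coactK y) :=
  LinearMap.congr_fun hy.hYD.coassoc y

lemma F1_comm (hy : Hyps actK coactK comulK counitK) (x y : K) :
    F1 H coactK y * (iK H x ⊗ₜ 1)
      = F2 H coactK (LinearMap.rTensor K (actr actK x) (coactK y)) := by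
  have := Zgen_left H x (iK H).toLinearMap (coactK y)
  rw [hy.coact_coassoc] at this
  refine this.trans ?_
  generalize coactK y = t
  induction t using TensorProduct.induction_on with
  | zero => simp
  | add y z hy hz => simp only [map_add, hy, hz]
  | tmul a w =>
    rw [LinearMap.lTensor_tmul, Zgen_right]
    simp [F1]

lemma F2_comul_mul (hy : Hyps actK coactK comulK counitK) (x y : K) :
    F2 H coactK (comulK (x * y)) = F2 H coactK (comulK x) * F2 H coactK (comulK y) := by
  have := LinearMap.congr_fun hy.hbraided (x ⊗ₜ y)
  simp only [LinearMap.comp_apply, LinearMap.mul'_apply, TensorProduct.map_tmul,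
    LinearEquiv.coe_coe] at this
  rw [this]
  generalize comulK x = t
  generalize comulK y = s
  induction t using TensorProduct.induction_on with
  | zero => simp
  | add y z hy hz => simp only [map_add, add_tmul, add_mul, hy, hz]
  | tmul p q =>
    induction s using TensorProduct.induction_on with
    | zero => simp
    | add y z hy hz => simp only [map_add, tmul_add, mul_add, hy, hz]
    | tmul r w =>
      have h1 : F2 H coactK (p ⊗ₜ q) * F2 H coactK (r ⊗ₜ w)
          = (iK H p ⊗ₜ 1) * F2 H coactK (LinearMap.rTensor K (actr actK r) (coactK q))
            * F1 H coactK w := by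
        rw [← F1_comm H hy]
        simp [mul_assoc]
      rw [h1]
      simp only [TensorProduct.assoc_symm_tmul, LinearMap.rTensor_tmul, TensorProduct.assoc_tmul,
        LinearMap.lTensor_tmul, ydBraid, LinearMap.comp_apply, LinearEquiv.coe_coe]
      generalize coactK q = u
      induction u using TensorProduct.induction_on with
      | zero => simp
      | add y z hy hz => simp only [map_add, tmul_add, add_tmul, mul_add, add_mul, hy, hz]
      | tmul a z =>
        simp [F1_mul H hy, ← mul_assoc]

/-- The comultiplication restricted to `K`. -/
def fK (hy : Hyps actK coactK comulK counitK) : K →ₐ[k] Bi H ⊗[k] Bi H :=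
  AlgHom.ofLinearMap (F2 H coactK ∘ₗ comulK)
    (by simp [hy.hcomul_one, F1_one H hy, Algebra.TensorProduct.one_def])
    (F2_comul_mul H hy)

lemma fK_apply (hy : Hyps actK coactK comulK counitK) (x : K) :
    fK H hy x = F2 H coactK (comulK x) := rfl

lemma cross_D (a : A) (p : K) : gA H a * (iK H p ⊗ₜ 1)
    = (LinearMap.mul' k (Bi H ⊗[k] Bi H) ∘ₗ TensorProduct.map
        ((TensorProduct.mk k (Bi H) (Bi H)).flip 1 ∘ₗ (iK H).toLinearMap ∘ₗ actr actK p)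
        (gA H).toLinearMap) (Coalgebra.comul (R := k) a) := by
  have := Zgen_left H p (jA H).toLinearMap (Coalgebra.comul (R := k) a)
  rw [Coalgebra.coassoc_apply] at this
  refine this.trans ?_
  generalize Coalgebra.comul (R := k) a = t
  induction t using TensorProduct.induction_on with
  | zero => simp
  | add y z hy hz => simp only [map_add, hy, hz]
  | tmul a w =>
    rw [LinearMap.lTensor_tmul, Zgen_right]
    simp [gA_apply]

lemma ydL_tmul (coactK : K →ₗ[k] A ⊗[k] K) (c : A) (q : K) : ydL actK coactK (c ⊗ₜ q)
    = TensorProduct.map (LinearMap.mul' k A) actK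
      ((TensorProduct.tensorTensorTensorComm k A A A K)
        ((Coalgebra.comul (R := k) c) ⊗ₜ (coactK q))) := rfl

lemma map_ydR (coactK : K →ₗ[k] A ⊗[k] K) (c : A) (q : K) :
    TensorProduct.map (jA H).toLinearMap (iK H).toLinearMap (ydR actK coactK (c ⊗ₜ q))
    = (LinearMap.mul' k (Bi H ⊗[k] Bi H) ∘ₗ TensorProduct.map
        (F1 H coactK ∘ₗ actr actK q)
        ((TensorProduct.mk k (Bi H) (Bi H)).flip 1 ∘ₗ (jA H).toLinearMap))
          (Coalgebra.comul (R := k) c) := by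
  simp only [ydR, LinearMap.comp_apply, LinearMap.rTensor_tmul, LinearEquiv.coe_coe]
  generalize Coalgebra.comul (R := k) c = t
  induction t using TensorProduct.induction_on with
  | zero => simp
  | add y z hy hz => simp only [map_add, add_tmul, hy, hz]
  | tmul a w =>
    simp only [TensorProduct.assoc_tmul, LinearMap.lTensor_tmul, LinearEquiv.coe_coe,
      TensorProduct.comm_tmul, TensorProduct.assoc_symm_tmul, LinearMap.rTensor_tmul,
      TensorProduct.map_tmul, LinearMap.comp_apply, F1, actr_apply]
    generalize coactK (actK (a ⊗ₜ q)) = t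
    induction t using TensorProduct.induction_on with
    | zero => simp
    | add y z hy hz => simp only [map_add, add_tmul, hy, hz]
    | tmul c d => simp


lemma cross_C (hy : Hyps actK coactK comulK counitK) (a : A) (q : K) :
    gA H a * F1 H coactK q
    = (LinearMap.mul' k (Bi H ⊗[k] Bi H) ∘ₗ TensorProduct.map
        (F1 H coactK ∘ₗ actr actK q) (gA H).toLinearMap) (Coalgebra.comul (R := k) a) := by
  -- the right hand side via coassociativity
  let Q : A ⊗[k] (A ⊗[k] A) →ₗ[k] Bi H ⊗[k] Bi H :=
    LinearMap.mul' k (Bi H ⊗[k] Bi H) ∘ₗ TensorProduct.map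
        (F1 H coactK ∘ₗ actr actK q)
        (TensorProduct.map (jA H).toLinearMap (jA H).toLinearMap)
  have h1 : ∀ t : A ⊗[k] A, (LinearMap.mul' k (Bi H ⊗[k] Bi H) ∘ₗ TensorProduct.map
        (F1 H coactK ∘ₗ actr actK q) (gA H).toLinearMap) t
      = Q (LinearMap.lTensor A (Coalgebra.comul (R := k)) t) := by
    intro t
    induction t using TensorProduct.induction_on with
    | zero => simp
    | add y z hy hz => simp only [map_add, hy, hz]
    | tmul c d => simp [Q, gA_apply]
  let R (w : A) (z : K) : A ⊗[k] (A ⊗[k] A) →ₗ[k] Bi H ⊗[k] Bi H :=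
    TensorProduct.map (LinearMap.mulRight k (jA H w) ∘ₗ (jA H).toLinearMap)
      ((toB H).toLinearMap ∘ₗ LinearMap.rTensor A (actr actK z))
  let E (s : A ⊗[k] K) : A ⊗[k] A →ₗ[k] Bi H ⊗[k] Bi H :=
    LinearMap.mul' k (Bi H ⊗[k] Bi H) ∘ₗ TensorProduct.map
      (TensorProduct.map (jA H).toLinearMap (iK H).toLinearMap
        ∘ₗ TensorProduct.map (LinearMap.mul' k A) actK
        ∘ₗ (TensorProduct.tensorTensorTensorComm k A A A K).toLinearMap
        ∘ₗ (TensorProduct.mk k (A ⊗[k] A) (A ⊗[k] K)).flip s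
        ∘ₗ Coalgebra.comul (R := k))
      (TensorProduct.mk k (Bi H) (Bi H) 1 ∘ₗ (jA H).toLinearMap)
  have h2 : ∀ t : A ⊗[k] A, Q (TensorProduct.assoc k A A A
      (LinearMap.rTensor A (Coalgebra.comul (R := k)) t)) = E (coactK q) t := by
    intro t
    induction t using TensorProduct.induction_on with
    | zero => simp
    | add y z hy hz => simp only [map_add, hy, hz]
    | tmul c e =>
      have hh : E (coactK q) (c ⊗ₜ e)
          = TensorProduct.map (jA H).toLinearMap (iK H).toLinearMap (ydL actK coactK (c ⊗ₜ q))
            * (1 ⊗ₜ jA H e) := by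
        simp [E, ydL_tmul]
      rw [hh, hy.hYD.yd, map_ydR, LinearMap.rTensor_tmul]
      generalize Coalgebra.comul (R := k) c = t
      induction t using TensorProduct.induction_on with
      | zero => simp
      | add y z hy hz => simp only [map_add, add_tmul, add_mul, hy, hz]
      | tmul c d => simp [Q, mul_assoc]
  have h3 : ∀ (w : A) (z : K) (t : A ⊗[k] A), E (w ⊗ₜ z) t = R w z (TensorProduct.assoc k A A A
      (LinearMap.rTensor A (Coalgebra.comul (R := k)) t)) := by
    intro w z t
    induction t using TensorProduct.induction_on with
    | zero => simp
    | add y z hy hz => simp only [map_add, hy, hz]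
    | tmul c e =>
      simp only [E, LinearMap.rTensor_tmul, LinearMap.comp_apply, TensorProduct.map_tmul]
      generalize Coalgebra.comul (R := k) c = t
      induction t using TensorProduct.induction_on with
      | zero => simp
      | add y z hy hz => simp only [map_add, add_tmul, add_mul, hy, hz]
      | tmul c d => simp [R, iK_mul_jA]
  have h4 : ∀ (w : A) (z : K) (t : A ⊗[k] A),
      TensorProduct.map (jA H).toLinearMap (jA H).toLinearMap t * (jA H w ⊗ₜ iK H z)
        = R w z (LinearMap.lTensor A (Coalgebra.comul (R := k)) t) := by
    intro w z t
    induction t using TensorProduct.induction_on with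
    | zero => simp
    | add y z hy hz => simp only [map_add, add_mul, hy, hz]
    | tmul c e => simp [R, jA_mul_iK, tau_tmul]
  have h5 : ∀ s, TensorProduct.map (jA H).toLinearMap (jA H).toLinearMap
        (Coalgebra.comul (R := k) a) * TensorProduct.map (jA H).toLinearMap (iK H).toLinearMap s
      = E s (Coalgebra.comul (R := k) a) := by
    intro s
    induction s using TensorProduct.induction_on with
    | zero =>
      have : E 0 = 0 := by ext; simp [E]
      simp [this]
    | add y z hy hz =>
      have : E (y + z) = E y + E z := by ext; simp [E, tmul_add, add_mul]
      simp only [map_add, mul_add, hy, hz, this, LinearMap.add_apply]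
    | tmul w z =>
      rw [h3, Coalgebra.coassoc_apply, ← h4]
      simp
  rw [h1, ← Coalgebra.coassoc_apply, h2, ← h5, gA_apply]
  rfl

lemma Hyps.comul_act' (hy : Hyps actK coactK comulK counitK) (c : A) (x : K) :
    comulK (actK (c ⊗ₜ x)) = tAct actK actK (c ⊗ₜ comulK x) :=
  LinearMap.congr_fun hy.hcomul_act (c ⊗ₜ x)

lemma cross (hy : Hyps actK coactK comulK counitK) (a : A) (x : K) :
    gA H a * fK H hy x
      = Phi (fK H hy).toLinearMap (gA H).toLinearMap (tau actK (a ⊗ₜ x)) := by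
  let E (s : K ⊗[k] K) : A ⊗[k] A →ₗ[k] Bi H ⊗[k] Bi H :=
    LinearMap.mul' k (Bi H ⊗[k] Bi H) ∘ₗ TensorProduct.map
      (F2 H coactK ∘ₗ tAct actK actK ∘ₗ (TensorProduct.mk k A (K ⊗[k] K)).flip s)
      (gA H).toLinearMap
  have h1 : ∀ t, Phi (fK H hy).toLinearMap (gA H).toLinearMap
      (LinearMap.rTensor A (actr actK x) t) = E (comulK x) t := by
    intro t
    induction t using TensorProduct.induction_on with
    | zero => simp
    | add y z hy hz => simp only [map_add, hy, hz]
    | tmul c e => simp [E, fK_apply, hy.comul_act']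
  let M (p q : K) : A ⊗[k] (A ⊗[k] A) →ₗ[k] Bi H ⊗[k] Bi H :=
    LinearMap.mul' k (Bi H ⊗[k] Bi H) ∘ₗ TensorProduct.map
      ((TensorProduct.mk k (Bi H) (Bi H)).flip 1 ∘ₗ (iK H).toLinearMap ∘ₗ actr actK p)
      (LinearMap.mul' k (Bi H ⊗[k] Bi H) ∘ₗ TensorProduct.map
        (F1 H coactK ∘ₗ actr actK q) (gA H).toLinearMap)
  have h2 : ∀ p q t, E (p ⊗ₜ q) t = M p q (TensorProduct.assoc k A A A
      (LinearMap.rTensor A (Coalgebra.comul (R := k)) t)) := by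
    intro p q t
    induction t using TensorProduct.induction_on with
    | zero => simp
    | add y z hy hz => simp only [map_add, hy, hz]
    | tmul c e =>
      simp only [E, LinearMap.rTensor_tmul, LinearMap.comp_apply, TensorProduct.map_tmul, tAct,
        LinearMap.flip_apply, TensorProduct.mk_apply]
      generalize Coalgebra.comul (R := k) c = t
      induction t using TensorProduct.induction_on with
      | zero => simp
      | add y z hy hz => simp only [map_add, add_tmul, hy, hz]
      | tmul c d => simp [M, mul_assoc]
  have h3 : ∀ p q t, (LinearMap.mul' k (Bi H ⊗[k] Bi H) ∘ₗ TensorProduct.map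
        ((TensorProduct.mk k (Bi H) (Bi H)).flip 1 ∘ₗ (iK H).toLinearMap ∘ₗ actr actK p)
        (gA H).toLinearMap) t * F1 H coactK q
      = M p q (LinearMap.lTensor A (Coalgebra.comul (R := k)) t) := by
    intro p q t
    induction t using TensorProduct.induction_on with
    | zero => simp
    | add y z hy hz => simp only [map_add, add_mul, hy, hz]
    | tmul c e =>
      simp only [M, LinearMap.lTensor_tmul, LinearMap.comp_apply _ _ (_ ⊗ₜ[k] _),
        TensorProduct.map_tmul, LinearMap.mul'_apply, ← cross_C H hy]
      simp [mul_assoc, cross_C H hy]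
  have h5 : ∀ s, gA H a * F2 H coactK s = E s (Coalgebra.comul (R := k) a) := by
    intro s
    induction s using TensorProduct.induction_on with
    | zero =>
      have : E 0 = 0 := by ext; simp [E]
      simp [this]
    | add y z hy hz =>
      have : E (y + z) = E y + E z := by ext; simp [E, tmul_add, add_mul]
      simp only [map_add, mul_add, hy, hz, this, LinearMap.add_apply]
    | tmul p q =>
      rw [h2, Coalgebra.coassoc_apply, ← h3, ← cross_D, F2_tmul, mul_assoc]
  rw [tau_tmul, h1, fK_apply, h5]

/-- The comultiplication as an algebra map. -/
def DeltaB (hy : Hyps actK coactK comulK counitK) : Bi H →ₐ[k] Bi H ⊗[k] Bi H :=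
  liftB H (fK H hy) (gA H) (cross H hy)

lemma DeltaB_toLinearMap (hy : Hyps actK coactK comulK counitK) :
    (DeltaB H hy).toLinearMap = comulB H coactK comulK := by
  apply Bi.lin_ext
  intro x a
  rw [iK_mul_jA, comulB_tmul, AlgHom.toLinearMap_apply, DeltaB, liftB_toB]
  simp [fK_apply]

@[simp] lemma DeltaB_iK (hy : Hyps actK coactK comulK counitK) (x : K) :
    DeltaB H hy (iK H x) = fK H hy x := by
  rw [iK_apply, DeltaB, liftB_toB]; simp

@[simp] lemma DeltaB_jA (hy : Hyps actK coactK comulK counitK) (a : A) :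
    DeltaB H hy (jA H a) = gA H a := by
  rw [jA_apply, DeltaB, liftB_toB]; simp


/-- The counit as an algebra map. -/
def epsB (hy : Hyps actK coactK comulK counitK) : Bi H →ₐ[k] k :=
  liftB H (AlgHom.ofLinearMap counitK hy.hcounit_one hy.hcounit_mul) (Bialgebra.counitAlgHom k A)
    (by
      intro a x
      rw [tau_tmul]
      have h : ∀ t : A ⊗[k] A, Phi (AlgHom.ofLinearMap counitK hy.hcounit_one
          hy.hcounit_mul).toLinearMap (Bialgebra.counitAlgHom k A).toLinearMap
          (LinearMap.rTensor A (actr actK x) t)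
          = Coalgebra.counit (R := k) (TensorProduct.lid k A
              (LinearMap.rTensor A (Coalgebra.counit (R := k)) t)) * counitK x := by
        intro t
        induction t using TensorProduct.induction_on with
        | zero => simp
        | add y z hy hz => simp only [map_add, add_mul, hy, hz]
        | tmul c e => simp [hy.hcounit_act]; ring
      rw [h]
      simp)

lemma epsB_toLinearMap (hy : Hyps actK coactK comulK counitK) :
    (epsB H hy).toLinearMap = counitB H counitK := by
  apply Bi.lin_ext
  intro x a
  rw [iK_mul_jA, counitB_toB, AlgHom.toLinearMap_apply, epsB, liftB_toB]
  simp

@[simp] lemma epsB_iK (hy : Hyps actK coactK comulK counitK) (x : K) :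
    epsB H hy (iK H x) = counitK x := by
  rw [iK_apply, epsB, liftB_toB]; simp

@[simp] lemma epsB_jA (hy : Hyps actK coactK comulK counitK) (a : A) :
    epsB H hy (jA H a) = Coalgebra.counit (R := k) a := by
  rw [jA_apply, epsB, liftB_toB]; simp [hy.hcounit_one]

/-- `assoc ∘ (Δ ⊗ id)`. -/
def D1 (hy : Hyps actK coactK comulK counitK) :
    Bi H ⊗[k] Bi H →ₐ[k] Bi H ⊗[k] (Bi H ⊗[k] Bi H) :=
  (Algebra.TensorProduct.assoc k k k (Bi H) (Bi H) (Bi H)).toAlgHom.comp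
    (Algebra.TensorProduct.map (DeltaB H hy) (AlgHom.id k (Bi H)))

/-- `id ⊗ Δ`. -/
def D2 (hy : Hyps actK coactK comulK counitK) :
    Bi H ⊗[k] Bi H →ₐ[k] Bi H ⊗[k] (Bi H ⊗[k] Bi H) :=
  Algebra.TensorProduct.map (AlgHom.id k (Bi H)) (DeltaB H hy)

@[simp] lemma D1_tmul (hy : Hyps actK coactK comulK counitK) (u v : Bi H) :
    D1 H hy (u ⊗ₜ v) = TensorProduct.assoc k _ _ _ (DeltaB H hy u ⊗ₜ v) := rfl

@[simp] lemma D2_tmul (hy : Hyps actK coactK comulK counitK) (u v : Bi H) :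
    D2 H hy (u ⊗ₜ v) = u ⊗ₜ DeltaB H hy v := rfl

lemma assoc_mul (u v : (Bi H ⊗[k] Bi H) ⊗[k] Bi H) :
    TensorProduct.assoc k _ _ _ (u * v)
      = TensorProduct.assoc k _ _ _ u * TensorProduct.assoc k _ _ _ v :=
  map_mul (Algebra.TensorProduct.assoc k k k (Bi H) (Bi H) (Bi H)) u v

lemma D1_F1 (hy : Hyps actK coactK comulK counitK) (q : K) :
    D1 H hy (F1 H coactK q)
      = TensorProduct.map (jA H).toLinearMap (F1 H coactK) (coactK q) := by
  let G : A ⊗[k] (A ⊗[k] K) →ₗ[k] Bi H ⊗[k] (Bi H ⊗[k] Bi H) :=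
    TensorProduct.map (jA H).toLinearMap
      (TensorProduct.map (jA H).toLinearMap (iK H).toLinearMap)
  have h1 : ∀ t, TensorProduct.map (jA H).toLinearMap (F1 H coactK) t
      = G (LinearMap.lTensor A coactK t) := by
    intro t
    induction t using TensorProduct.induction_on with
    | zero => simp
    | add y z hy hz => simp only [map_add, hy, hz]
    | tmul c e => simp [G, F1]
  have h2 : ∀ t, D1 H hy (TensorProduct.map (jA H).toLinearMap (iK H).toLinearMap t)
      = G (TensorProduct.assoc k A A K
        (LinearMap.rTensor K (Coalgebra.comul (R := k)) t)) := by
    intro t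
    induction t using TensorProduct.induction_on with
    | zero => simp
    | add y z hy hz => simp only [map_add, hy, hz]
    | tmul c e =>
      simp only [TensorProduct.map_tmul, AlgHom.toLinearMap_apply, D1_tmul, DeltaB_jA, gA_apply,
        LinearMap.rTensor_tmul]
      generalize Coalgebra.comul (R := k) c = t
      induction t using TensorProduct.induction_on with
      | zero => simp
      | add y z hy hz => simp only [map_add, add_tmul, hy, hz]
      | tmul c d => simp [G]
  rw [h1, ← hy.coact_coassoc, ← h2]
  rfl

/-- `p ⊗ q ↦ (F1 p ⊗ 1) D1 (F1 q)`. -/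
def N (hy : Hyps actK coactK comulK counitK) :
    K ⊗[k] K →ₗ[k] Bi H ⊗[k] (Bi H ⊗[k] Bi H) :=
  LinearMap.mul' k (Bi H ⊗[k] (Bi H ⊗[k] Bi H)) ∘ₗ TensorProduct.map
    ((TensorProduct.assoc k (Bi H) (Bi H) (Bi H)).toLinearMap ∘ₗ
      (TensorProduct.mk k (Bi H ⊗[k] Bi H) (Bi H)).flip 1 ∘ₗ F1 H coactK)
    ((D1 H hy).toLinearMap ∘ₗ F1 H coactK)

lemma D2_F1 (hy : Hyps actK coactK comulK counitK) (y : K) :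
    D2 H hy (F1 H coactK y) = N H hy (comulK y) := by
  have h1 : ∀ t, D2 H hy (TensorProduct.map (jA H).toLinearMap (iK H).toLinearMap t)
      = TensorProduct.map (jA H).toLinearMap (F2 H coactK) (LinearMap.lTensor A comulK t) := by
    intro t
    induction t using TensorProduct.induction_on with
    | zero => simp
    | add y z hy hz => simp only [map_add, hy, hz]
    | tmul c e => simp [fK_apply]
  have h2 := LinearMap.congr_fun hy.hcomul_coact y
  simp only [LinearMap.comp_apply] at h2
  rw [F1, LinearMap.comp_apply, h1, h2]
  generalize comulK y = t
  induction t using TensorProduct.induction_on with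
  | zero => simp
  | add y z hy hz => simp only [map_add, hy, hz]
  | tmul p q =>
    simp only [N, LinearMap.comp_apply, TensorProduct.map_tmul, LinearMap.mul'_apply,
      AlgHom.toLinearMap_apply, D1_F1]
    simp only [F1, tCoact, LinearMap.comp_apply, TensorProduct.map_tmul]
    change _ = _ * TensorProduct.map (jA H).toLinearMap (F1 H coactK) (coactK q)
    generalize coactK p = u
    generalize coactK q = v
    induction u using TensorProduct.induction_on with
    | zero => simp
    | add y z hy hz => simp only [map_add, add_tmul, add_mul, hy, hz]
    | tmul a p =>
      induction v using TensorProduct.induction_on with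
      | zero => simp
      | add y z hy hz => simp only [map_add, tmul_add, mul_add, hy, hz]
      | tmul b q => simp

lemma coassoc_iK (hy : Hyps actK coactK comulK counitK) (x : K) :
    D1 H hy (fK H hy x) = D2 H hy (fK H hy x) := by
  let M : K ⊗[k] (K ⊗[k] K) →ₗ[k] Bi H ⊗[k] (Bi H ⊗[k] Bi H) :=
    LinearMap.mul' k (Bi H ⊗[k] (Bi H ⊗[k] Bi H)) ∘ₗ TensorProduct.map
      ((TensorProduct.mk k (Bi H) (Bi H ⊗[k] Bi H)).flip 1 ∘ₗ (iK H).toLinearMap) (N H hy)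
  have h1 : ∀ t, D2 H hy (F2 H coactK t) = M (LinearMap.lTensor K comulK t) := by
    intro t
    induction t using TensorProduct.induction_on with
    | zero => simp
    | add y z hy hz => simp only [map_add, hy, hz]
    | tmul y z => simp [M, D2_F1]
  have h2 : ∀ t, D1 H hy (F2 H coactK t) = M (TensorProduct.assoc k K K K
      (LinearMap.rTensor K comulK t)) := by
    intro t
    induction t using TensorProduct.induction_on with
    | zero => simp
    | add y z hy hz => simp only [map_add, hy, hz]
    | tmul y z =>
      simp only [F2_tmul, map_mul, D1_tmul, DeltaB_iK, fK_apply, LinearMap.rTensor_tmul]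
      generalize comulK y = t
      induction t using TensorProduct.induction_on with
      | zero => simp
      | add y z hy hz => simp only [map_add, add_tmul, add_mul, hy, hz]
      | tmul c d =>
        have : (iK H c ⊗ₜ[k] (1 : Bi H) * F1 H coactK d) ⊗ₜ[k] (1 : Bi H)
            = ((iK H c ⊗ₜ[k] (1 : Bi H)) ⊗ₜ[k] (1 : Bi H)) * (F1 H coactK d ⊗ₜ[k] 1) := by simp
        rw [F2_tmul, this, assoc_mul]
        simp [M, N, mul_assoc, Algebra.TensorProduct.one_def]
  have h3 := LinearMap.congr_fun hy.hcoassoc x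
  simp only [LinearMap.comp_apply, LinearEquiv.coe_coe] at h3
  rw [fK_apply, h1, h2, h3]

lemma coassoc_jA (hy : Hyps actK coactK comulK counitK) (a : A) :
    D1 H hy (gA H a) = D2 H hy (gA H a) := by
  let G : A ⊗[k] (A ⊗[k] A) →ₗ[k] Bi H ⊗[k] (Bi H ⊗[k] Bi H) :=
    TensorProduct.map (jA H).toLinearMap
      (TensorProduct.map (jA H).toLinearMap (jA H).toLinearMap)
  have h1 : ∀ t, D2 H hy (TensorProduct.map (jA H).toLinearMap (jA H).toLinearMap t)
      = G (LinearMap.lTensor A (Coalgebra.comul (R := k)) t) := by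
    intro t
    induction t using TensorProduct.induction_on with
    | zero => simp
    | add y z hy hz => simp only [map_add, hy, hz]
    | tmul c e => simp [G, gA_apply]
  have h2 : ∀ t, D1 H hy (TensorProduct.map (jA H).toLinearMap (jA H).toLinearMap t)
      = G (TensorProduct.assoc k A A A
        (LinearMap.rTensor A (Coalgebra.comul (R := k)) t)) := by
    intro t
    induction t using TensorProduct.induction_on with
    | zero => simp
    | add y z hy hz => simp only [map_add, hy, hz]
    | tmul c e =>
      simp only [TensorProduct.map_tmul, AlgHom.toLinearMap_apply, D1_tmul, DeltaB_jA, gA_apply,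
        LinearMap.rTensor_tmul]
      generalize Coalgebra.comul (R := k) c = t
      induction t using TensorProduct.induction_on with
      | zero => simp
      | add y z hy hz => simp only [map_add, add_tmul, hy, hz]
      | tmul c d => simp [G]
  rw [gA_apply, h1, h2, Coalgebra.coassoc_apply]

lemma comulB_coassoc (hy : Hyps actK coactK comulK counitK) :
    (TensorProduct.assoc k (Bi H) (Bi H) (Bi H)).toLinearMap
      ∘ₗ LinearMap.rTensor (Bi H) (comulB H coactK comulK) ∘ₗ comulB H coactK comulK
      = LinearMap.lTensor (Bi H) (comulB H coactK comulK) ∘ₗ comulB H coactK comulK := by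
  have : (D1 H hy).comp (DeltaB H hy) = (D2 H hy).comp (DeltaB H hy) :=
    Bi.alg_ext H (fun x => by simpa using coassoc_iK H hy x) (fun a => by simpa using coassoc_jA H hy a)
  rw [← DeltaB_toLinearMap H hy]
  exact congrArg AlgHom.toLinearMap this

lemma F1_eps_left (hy : Hyps actK coactK comulK counitK) (z : K) :
    (Algebra.TensorProduct.map (epsB H hy) (AlgHom.id k (Bi H))) (F1 H coactK z)
      = 1 ⊗ₜ iK H z := by
  have h : ∀ t, (Algebra.TensorProduct.map (epsB H hy) (AlgHom.id k (Bi H)))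
      (TensorProduct.map (jA H).toLinearMap (iK H).toLinearMap t)
      = 1 ⊗ₜ iK H (TensorProduct.lid k K (LinearMap.rTensor K (Coalgebra.counit (R := k)) t)) := by
    intro t
    induction t using TensorProduct.induction_on with
    | zero => simp
    | add y z hy hz => simp only [map_add, tmul_add, hy, hz]
    | tmul c e => simp [tmul_smul, smul_tmul']
  have h3 := LinearMap.congr_fun hy.hYD.counit_coact z
  simp only [LinearMap.comp_apply, LinearEquiv.coe_coe, LinearMap.id_apply] at h3
  rw [F1, LinearMap.comp_apply, h, h3]

lemma F1_eps_right (hy : Hyps actK coactK comulK counitK) (z : K) :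
    (Algebra.TensorProduct.map (AlgHom.id k (Bi H)) (epsB H hy)) (F1 H coactK z)
      = 1 ⊗ₜ counitK z := by
  have h : ∀ t, (Algebra.TensorProduct.map (AlgHom.id k (Bi H)) (epsB H hy))
      (TensorProduct.map (jA H).toLinearMap (iK H).toLinearMap t)
      = jA H (TensorProduct.rid k A (LinearMap.lTensor A counitK t)) ⊗ₜ 1 := by
    intro t
    induction t using TensorProduct.induction_on with
    | zero => simp
    | add y z hy hz => simp only [map_add, add_tmul, hy, hz]
    | tmul c e => simp [smul_tmul]
  rw [F1, LinearMap.comp_apply, h, hy.hcounit_coact]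
  simp [smul_tmul]

lemma counit_left (hy : Hyps actK coactK comulK counitK) :
    (TensorProduct.lid k (Bi H)).toLinearMap
      ∘ₗ LinearMap.rTensor (Bi H) (counitB H counitK) ∘ₗ comulB H coactK comulK
      = LinearMap.id := by
  have : ((Algebra.TensorProduct.lid k (Bi H)).toAlgHom.comp
      (Algebra.TensorProduct.map (epsB H hy) (AlgHom.id k (Bi H)))).comp (DeltaB H hy)
      = AlgHom.id k (Bi H) := by
    apply Bi.alg_ext H
    · intro x
      have h : ∀ t, (Algebra.TensorProduct.lid k (Bi H))
        ((Algebra.TensorProduct.map (epsB H hy) (AlgHom.id k (Bi H))) (F2 H coactK t))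
        = iK H (TensorProduct.lid k K (LinearMap.rTensor K counitK t)) := by
        intro t
        induction t using TensorProduct.induction_on with
        | zero => simp
        | add y z hy hz => simp only [map_add, hy, hz]
        | tmul c e =>
          rw [F2_tmul, map_mul, F1_eps_left]
          simp
      have h3 := LinearMap.congr_fun hy.hcounit₁ x
      simp only [LinearMap.comp_apply, LinearEquiv.coe_coe, LinearMap.id_apply] at h3
      have := h (comulK x)
      rw [h3] at this
      simpa [fK_apply] using this
    · intro a
      have h : ∀ t, (Algebra.TensorProduct.lid k (Bi H))
        ((Algebra.TensorProduct.map (epsB H hy) (AlgHom.id k (Bi H)))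
          (TensorProduct.map (jA H).toLinearMap (jA H).toLinearMap t))
        = jA H (TensorProduct.lid k A (LinearMap.rTensor A (Coalgebra.counit (R := k)) t)) := by
        intro t
        induction t using TensorProduct.induction_on with
        | zero => simp
        | add y z hy hz => simp only [map_add, hy, hz]
        | tmul c e => simp
      have := h (Coalgebra.comul (R := k) a)
      rw [Coalgebra.rTensor_counit_comul] at this
      simpa [gA_apply] using this
  rw [← DeltaB_toLinearMap H hy, ← epsB_toLinearMap H hy]
  exact congrArg AlgHom.toLinearMap this

lemma counit_right (hy : Hyps actK coactK comulK counitK) :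
    (TensorProduct.rid k (Bi H)).toLinearMap
      ∘ₗ LinearMap.lTensor (Bi H) (counitB H counitK) ∘ₗ comulB H coactK comulK
      = LinearMap.id := by
  have : ((Algebra.TensorProduct.rid k k (Bi H)).toAlgHom.comp
      (Algebra.TensorProduct.map (AlgHom.id k (Bi H)) (epsB H hy))).comp (DeltaB H hy)
      = AlgHom.id k (Bi H) := by
    apply Bi.alg_ext H
    · intro x
      have h : ∀ t, (Algebra.TensorProduct.rid k k (Bi H))
        ((Algebra.TensorProduct.map (AlgHom.id k (Bi H)) (epsB H hy)) (F2 H coactK t))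
        = iK H (TensorProduct.rid k K (LinearMap.lTensor K counitK t)) := by
        intro t
        induction t using TensorProduct.induction_on with
        | zero => simp
        | add y z hy hz => simp only [map_add, hy, hz]
        | tmul c e =>
          rw [F2_tmul, map_mul, F1_eps_right]
          simp
      have h3 := LinearMap.congr_fun hy.hcounit₂ x
      simp only [LinearMap.comp_apply, LinearEquiv.coe_coe, LinearMap.id_apply] at h3
      have := h (comulK x)
      rw [h3] at this
      simpa [fK_apply] using this
    · intro a
      have h : ∀ t, (Algebra.TensorProduct.rid k k (Bi H))
        ((Algebra.TensorProduct.map (AlgHom.id k (Bi H)) (epsB H hy))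
          (TensorProduct.map (jA H).toLinearMap (jA H).toLinearMap t))
        = jA H (TensorProduct.rid k A (LinearMap.lTensor A (Coalgebra.counit (R := k)) t)) := by
        intro t
        induction t using TensorProduct.induction_on with
        | zero => simp
        | add y z hy hz => simp only [map_add, hy, hz]
        | tmul c e => simp
      have := h (Coalgebra.comul (R := k) a)
      rw [Coalgebra.lTensor_counit_comul] at this
      simpa [gA_apply] using this
  rw [← DeltaB_toLinearMap H hy, ← epsB_toLinearMap H hy]
  exact congrArg AlgHom.toLinearMap this


/-- `b ⊗ z ↦ (y ⊗ b c) ⊗ (z ⊗ d)`. -/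
def Gm (y : K) (c d : A) : A ⊗[k] K →ₗ[k] (K ⊗[k] A) ⊗[k] (K ⊗[k] A) :=
  TensorProduct.map (TensorProduct.mk k K A y ∘ₗ LinearMap.mulRight k c)
    ((TensorProduct.mk k K A).flip d)

lemma biComul_apply_of {M N : Type*} [AddCommGroup M] [Module k M] [AddCommGroup N] [Module k N]
    (coactK : K →ₗ[k] A ⊗[k] K) (comulK : K →ₗ[k] K ⊗[k] K)
    (f : K ⊗[k] A →ₗ[k] M) (g : K ⊗[k] A →ₗ[k] N)
    (T : (K ⊗[k] K) ⊗[k] (A ⊗[k] A) →ₗ[k] M ⊗[k] N)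
    (h : ∀ y z c d, TensorProduct.map f g (Gm y c d (coactK z)) = T ((y ⊗ₜ z) ⊗ₜ (c ⊗ₜ d)))
    (x : K) (a : A) :
    TensorProduct.map f g (biComul comulK coactK (x ⊗ₜ a))
      = T (comulK x ⊗ₜ Coalgebra.comul (R := k) a) := by
  simp only [biComul, LinearMap.comp_apply, TensorProduct.map_tmul]
  generalize (Coalgebra.comul (R := k) a) = s
  generalize comulK x = t
  induction t using TensorProduct.induction_on with
  | zero => simp
  | add y z hy hz => simp only [map_add, add_tmul, hy, hz]
  | tmul y z =>
    induction s using TensorProduct.induction_on with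
    | zero => simp
    | add y z hy hz => simp only [map_add, tmul_add, hy, hz]
    | tmul c d =>
      rw [← h]
      simp only [LinearMap.rTensor_tmul, LinearMap.lTensor_tmul, LinearEquiv.coe_coe]
      congr 1
      generalize coactK z = w
      induction w using TensorProduct.induction_on with
      | zero => simp
      | add y z hy hz => simp only [map_add, tmul_add, add_tmul, hy, hz]
      | tmul b z => simp [Gm]

/-- The projection `x ⊗ a ↦ ε(a) x`. -/
def pK : K ⊗[k] A →ₗ[k] K :=
  (TensorProduct.rid k K).toLinearMap ∘ₗ LinearMap.lTensor K (Coalgebra.counit (R := k))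

/-- The projection `x ⊗ a ↦ ε(x) a`. -/
def piA (counitK : K →ₗ[k] k) : K ⊗[k] A →ₗ[k] A :=
  (TensorProduct.lid k A).toLinearMap ∘ₗ LinearMap.rTensor A counitK

@[simp] lemma pK_tmul (x : K) (a : A) :
    pK (k := k) (x ⊗ₜ[k] a) = Coalgebra.counit (R := k) a • x := by simp [pK]

@[simp] lemma piA_tmul (counitK : K →ₗ[k] k) (x : K) (a : A) :
    piA counitK (x ⊗ₜ[k] a) = counitK x • a := by simp [piA]

lemma counit_counit_comul (a : A) :
    LinearMap.mul' k k (TensorProduct.map (Coalgebra.counit (R := k)) (Coalgebra.counit (R := k))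
      (Coalgebra.comul (R := k) a)) = Coalgebra.counit (R := k) a := by
  have h : ∀ t : A ⊗[k] A, LinearMap.mul' k k (TensorProduct.map (Coalgebra.counit (R := k))
      (Coalgebra.counit (R := k)) t) = Coalgebra.counit (R := k)
        (TensorProduct.lid k A (LinearMap.rTensor A (Coalgebra.counit (R := k)) t)) := by
    intro t
    induction t using TensorProduct.induction_on with
    | zero => simp
    | add y z hy hz => simp only [map_add, hy, hz]
    | tmul c d => simp
  rw [h]; simp

lemma Hyps.counit_coact' (hy : Hyps actK coactK comulK counitK) (z : K) :
    TensorProduct.lid k K (LinearMap.rTensor K (Coalgebra.counit (R := k)) (coactK z)) = z :=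
  LinearMap.congr_fun hy.hYD.counit_coact z

lemma Hyps.counit_comul (hy : Hyps actK coactK comulK counitK) (z : K) :
    TensorProduct.lid k K (LinearMap.rTensor K counitK (comulK z)) = z :=
  LinearMap.congr_fun hy.hcounit₁ z

lemma Hyps.comul_counit (hy : Hyps actK coactK comulK counitK) (z : K) :
    TensorProduct.rid k K (LinearMap.lTensor K counitK (comulK z)) = z :=
  LinearMap.congr_fun hy.hcounit₂ z

lemma Hyps.counit_counit (hy : Hyps actK coactK comulK counitK) (x : K) :
    LinearMap.mul' k k (TensorProduct.map counitK counitK (comulK x)) = counitK x := by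
  have h : ∀ t : K ⊗[k] K, LinearMap.mul' k k (TensorProduct.map counitK counitK t)
      = counitK (TensorProduct.lid k K (LinearMap.rTensor K counitK t)) := by
    intro t
    induction t using TensorProduct.induction_on with
    | zero => simp
    | add y z hy hz => simp only [map_add, hy, hz]
    | tmul c d => simp
  rw [h, hy.counit_comul]

lemma pp_comul (hy : Hyps actK coactK comulK counitK) (u : K ⊗[k] A) :
    TensorProduct.map (pK (k := k)) (pK (k := k)) (biComul comulK coactK u)
      = comulK (pK u) := by
  induction u using TensorProduct.induction_on with
  | zero => simp
  | add y z hy hz => simp only [map_add, hy, hz]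
  | tmul x a =>
    rw [biComul_apply_of coactK comulK pK pK ((TensorProduct.rid k (K ⊗[k] K)).toLinearMap
      ∘ₗ LinearMap.lTensor (K ⊗[k] K) (LinearMap.mul' k k ∘ₗ
        TensorProduct.map (Coalgebra.counit (R := k)) (Coalgebra.counit (R := k))))]
    · simp only [LinearMap.comp_apply, LinearMap.lTensor_tmul, counit_counit_comul]
      simp
    · intro y z c d
      have h : ∀ w : A ⊗[k] K, TensorProduct.map (pK (k := k)) (pK (k := k)) (Gm y c d w)
          = (Coalgebra.counit (R := k) c * Coalgebra.counit (R := k) d) •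
            (y ⊗ₜ TensorProduct.lid k K (LinearMap.rTensor K (Coalgebra.counit (R := k)) w)) := by
        intro w
        induction w using TensorProduct.induction_on with
        | zero => simp
        | add y z hy hz => simp only [map_add, tmul_add, smul_add, hy, hz]
        | tmul b z =>
          simp only [Gm, TensorProduct.map_tmul, LinearMap.comp_apply, TensorProduct.mk_apply,
            LinearMap.mulRight_apply, LinearMap.flip_apply, pK_tmul, Bialgebra.counit_mul,
            LinearMap.rTensor_tmul, TensorProduct.lid_tmul, tmul_smul, ← smul_tmul', smul_smul]
          congr 1; ring
      rw [h, hy.counit_coact']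
      simp

lemma pipi_comul (hy : Hyps actK coactK comulK counitK) (u : K ⊗[k] A) :
    TensorProduct.map (piA counitK) (piA counitK) (biComul comulK coactK u)
      = Coalgebra.comul (R := k) (piA counitK u) := by
  induction u using TensorProduct.induction_on with
  | zero => simp
  | add y z hy hz => simp only [map_add, hy, hz]
  | tmul x a =>
    rw [biComul_apply_of coactK comulK (piA counitK) (piA counitK)
      ((TensorProduct.lid k (A ⊗[k] A)).toLinearMap
      ∘ₗ LinearMap.rTensor (A ⊗[k] A) (LinearMap.mul' k k ∘ₗ
        TensorProduct.map counitK counitK))]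
    · simp only [LinearMap.comp_apply, LinearMap.rTensor_tmul, hy.counit_counit]
      simp
    · intro y z c d
      have h : ∀ w : A ⊗[k] K, TensorProduct.map (piA counitK) (piA counitK) (Gm y c d w)
          = counitK y • ((TensorProduct.rid k A (LinearMap.lTensor A counitK w) * c) ⊗ₜ d) := by
        intro w
        induction w using TensorProduct.induction_on with
        | zero => simp
        | add y z hy hz => simp only [map_add, add_mul, add_tmul, smul_add, hy, hz]
        | tmul b z =>
          simp only [Gm, TensorProduct.map_tmul, LinearMap.comp_apply, TensorProduct.mk_apply,
            LinearMap.mulRight_apply, LinearMap.flip_apply, piA_tmul, LinearMap.lTensor_tmul,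
            TensorProduct.rid_tmul, smul_mul_assoc, tmul_smul, ← smul_tmul', smul_smul]
          congr 1; ring
      rw [h, hy.hcounit_coact]
      simp [smul_smul, ← smul_tmul']

lemma ppi_comul (hy : Hyps actK coactK comulK counitK) (u : K ⊗[k] A) :
    TensorProduct.map (pK (k := k)) (piA counitK) (biComul comulK coactK u) = u := by
  induction u using TensorProduct.induction_on with
  | zero => simp
  | add y z hy hz => simp only [map_add, hy, hz]
  | tmul x a =>
    rw [biComul_apply_of coactK comulK pK (piA counitK)
      (TensorProduct.map ((TensorProduct.rid k K).toLinearMap ∘ₗ LinearMap.lTensor K counitK)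
        ((TensorProduct.lid k A).toLinearMap ∘ₗ
          LinearMap.rTensor A (Coalgebra.counit (R := k))))]
    · simp [hy.comul_counit]
    · intro y z c d
      have h : ∀ w : A ⊗[k] K, TensorProduct.map (pK (k := k)) (piA counitK) (Gm y c d w)
          = (Coalgebra.counit (R := k) c * counitK (TensorProduct.lid k K
            (LinearMap.rTensor K (Coalgebra.counit (R := k)) w))) • (y ⊗ₜ d) := by
        intro w
        induction w using TensorProduct.induction_on with
        | zero => simp
        | add y z hy hz => simp only [map_add, mul_add, add_smul, hy, hz]
        | tmul b z =>
          simp only [Gm, TensorProduct.map_tmul, LinearMap.comp_apply, TensorProduct.mk_apply,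
            LinearMap.mulRight_apply, LinearMap.flip_apply, pK_tmul, piA_tmul,
            Bialgebra.counit_mul, map_smul, smul_eq_mul,
            LinearMap.rTensor_tmul, TensorProduct.lid_tmul, tmul_smul, ← smul_tmul', smul_smul]
          congr 1; ring
      rw [h, hy.counit_coact']
      simp [smul_smul, ← smul_tmul', tmul_smul, mul_comm]

lemma counit_pK (u : K ⊗[k] A) : counitK (pK u) = biCounit counitK u := by
  induction u using TensorProduct.induction_on with
  | zero => simp
  | add y z hy hz => simp only [map_add, hy, hz]
  | tmul x a => simp [biCounit, mul_comm]

lemma counit_piA (u : K ⊗[k] A) :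
    Coalgebra.counit (R := k) (piA counitK u) = biCounit counitK u := by
  induction u using TensorProduct.induction_on with
  | zero => simp
  | add y z hy hz => simp only [map_add, hy, hz]
  | tmul x a => simp [biCounit]

/-- The coalgebra structure on the biproduct. -/
@[reducible] def coalgB (hy : Hyps actK coactK comulK counitK) : Coalgebra k (Bi H) where
  comul := comulB H coactK comulK
  counit := counitB H counitK
  coassoc := comulB_coassoc H hy
  rTensor_counit_comp_comul := by
    have := counit_left H hy
    ext u
    apply (TensorProduct.lid k (Bi H)).injective
    simpa using LinearMap.congr_fun this u
  lTensor_counit_comp_comul := by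
    have := counit_right H hy
    ext u
    apply (TensorProduct.rid k (Bi H)).injective
    simpa using LinearMap.congr_fun this u

lemma mul'_Bi (t : (K ⊗[k] A) ⊗[k] (K ⊗[k] A)) :
    LinearMap.mul' k (Bi H) (TensorProduct.map (toB H).toLinearMap (toB H).toLinearMap t)
      = toB H (biMul actK t) := by
  induction t using TensorProduct.induction_on with
  | zero => simp
  | add y z hy hz => simp only [map_add, hy, hz]
  | tmul x a => simp [toB_biMul]

open WithConv in
/-- Convolution products of maps factoring through two given maps. -/
lemma conv_key (hy : Hyps actK coactK comulK counitK)
    {M N : Type*} [AddCommGroup M] [Module k M] [AddCommGroup N] [Module k N]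
    (f : K ⊗[k] A →ₗ[k] M) (g : K ⊗[k] A →ₗ[k] N) (F : M →ₗ[k] Bi H) (G : N →ₗ[k] Bi H)
    (u : K ⊗[k] A) :
    letI := coalgB H hy
    (toConv (F ∘ₗ f ∘ₗ (toB H).symm.toLinearMap) * toConv (G ∘ₗ g ∘ₗ (toB H).symm.toLinearMap))
      (toB H u) = LinearMap.mul' k (Bi H) (TensorProduct.map F G
        (TensorProduct.map f g (biComul comulK coactK u))) := by
  letI := coalgB H hy
  rw [LinearMap.convMul_apply]
  change LinearMap.mul' k (Bi H) (TensorProduct.map _ _ (comulB H coactK comulK (toB H u))) = _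
  rw [comulB_toB]
  congr 1
  generalize biComul comulK coactK u = t
  induction t using TensorProduct.induction_on with
  | zero => simp
  | add y z hy hz => simp only [map_add, hy, hz]
  | tmul x a => simp

lemma mapmul {R : Type*} [Ring R] [Algebra k R] (i : R →ₐ[k] Bi H) (f g : R →ₗ[k] R)
    (t : R ⊗[k] R) : LinearMap.mul' k (Bi H) (TensorProduct.map (i.toLinearMap ∘ₗ f)
      (i.toLinearMap ∘ₗ g) t) = i (LinearMap.mul' k R (TensorProduct.map f g t)) := by
  induction t using TensorProduct.induction_on with
  | zero => simp
  | add y z hy hz => simp only [map_add, hy, hz]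
  | tmul x a => simp

open WithConv in
lemma exists_antipode (hy : Hyps actK coactK comulK counitK) (SK : K →ₗ[k] K)
    (hSK₁ : ∀ h : K, LinearMap.mul' k K (LinearMap.rTensor K SK (comulK h))
        = counitK h • (1 : K))
    (hSK₂ : ∀ h : K, LinearMap.mul' k K (LinearMap.lTensor K SK (comulK h))
        = counitK h • (1 : K)) :
    ∃ S : Bi H →ₗ[k] Bi H,
      (∀ u, LinearMap.mul' k (Bi H) (LinearMap.rTensor (Bi H) S (comulB H coactK comulK u))
        = counitB H counitK u • (1 : Bi H)) ∧
      (∀ u, LinearMap.mul' k (Bi H) (LinearMap.lTensor (Bi H) S (comulB H coactK comulK u))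
        = counitB H counitK u • (1 : Bi H)) := by
  letI := coalgB H hy
  have one : ∀ u : K ⊗[k] A, (1 : WithConv (Bi H →ₗ[k] Bi H)) (toB H u)
      = biCounit counitK u • (1 : Bi H) := by
    intro u
    rw [LinearMap.convOne_apply, Algebra.algebraMap_eq_smul_one]
    rfl
  have ext' : ∀ {f g : WithConv (Bi H →ₗ[k] Bi H)}, (∀ u, f (toB H u) = g (toB H u)) → f = g := by
    intro f g h
    ext u
    exact h ((toB H).symm u)
  let s := (toB H).symm.toLinearMap
  let P := toConv (((iK H).toLinearMap ∘ₗ LinearMap.id) ∘ₗ pK ∘ₗ s)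
  let P' := toConv (((iK H).toLinearMap ∘ₗ SK) ∘ₗ pK ∘ₗ s)
  let J := toConv (((jA H).toLinearMap ∘ₗ LinearMap.id) ∘ₗ piA counitK ∘ₗ s)
  let J' := toConv (((jA H).toLinearMap ∘ₗ HopfAlgebra.antipode k) ∘ₗ piA counitK ∘ₗ s)
  have e1 : P * P' = 1 := ext' fun u => by
    rw [conv_key, mapmul, pp_comul hy, one, ← LinearMap.lTensor, hSK₂, counit_pK, map_smul, map_one]
  have e2 : P' * P = 1 := ext' fun u => by
    rw [conv_key, mapmul, pp_comul hy, one, ← LinearMap.rTensor, hSK₁, counit_pK, map_smul, map_one]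
  have e3 : J * J' = 1 := ext' fun u => by
    rw [conv_key, mapmul, pipi_comul hy, one, ← LinearMap.lTensor,
      HopfAlgebra.mul_antipode_lTensor_comul_apply, counit_piA, AlgHom.commutes,
      Algebra.algebraMap_eq_smul_one]
  have e4 : J' * J = 1 := ext' fun u => by
    rw [conv_key, mapmul, pipi_comul hy, one, ← LinearMap.rTensor,
      HopfAlgebra.mul_antipode_rTensor_comul_apply, counit_piA, AlgHom.commutes,
      Algebra.algebraMap_eq_smul_one]
  have e5 : P * J = toConv LinearMap.id := ext' fun u => by
    rw [conv_key, ppi_comul hy]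
    exact Phi_ij H u
  have r1 : (J' * P') * toConv LinearMap.id = 1 := by
    rw [← e5, mul_assoc, ← mul_assoc P', e2, one_mul, e4]
  have r2 : toConv LinearMap.id * (J' * P') = 1 := by
    rw [← e5, mul_assoc, ← mul_assoc J, e3, one_mul, e1]
  refine ⟨(J' * P').ofConv, fun u => ?_, fun u => ?_⟩
  · have := congrArg (fun f => f.ofConv u) r1
    exact this.trans (one u)
  · have := congrArg (fun f => f.ofConv u) r2
    exact this.trans (one u)

lemma tmul_mul_eq (s t : Bi H ⊗[k] Bi H) :
    s * t = TensorProduct.map (LinearMap.mul' k (Bi H)) (LinearMap.mul' k (Bi H))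
      (TensorProduct.tensorTensorTensorComm k (Bi H) (Bi H) (Bi H) (Bi H) (s ⊗ₜ t)) := by
  induction s using TensorProduct.induction_on with
  | zero => simp
  | add y z hy hz => simp only [map_add, add_mul, add_tmul, hy, hz]
  | tmul a b =>
    induction t using TensorProduct.induction_on with
    | zero => simp
    | add y z hy hz => simp only [map_add, mul_add, tmul_add, hy, hz]
    | tmul c d => simp

lemma mul'_eq_biMul : LinearMap.mul' k (Bi H) = biMul actK := by
  apply TensorProduct.ext'
  intro u v
  rfl

end Radford

/-- Let `A` be a Hopf algebra over a field `k` and `K` a Hopf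
algebra in the braided category of left Yetter–Drinfel'd modules over `A`.  Then the
Radford biproduct `K ⋊ A` (the vector space `K ⊗ A` with the smash product
multiplication, unit `1 ⊗ 1`, cosmash comultiplication and counit `ε_K ⊗ ε_A`)
is a Hopf algebra over `k`: a bialgebra whose identity has a convolution inverse. -/
theorem radford_biproduct_hopf
    (actK : A ⊗[k] K →ₗ[k] K) (coactK : K →ₗ[k] A ⊗[k] K)
    (comulK : K →ₗ[k] K ⊗[k] K) (counitK : K →ₗ[k] k) (SK : K →ₗ[k] K)
    -- `K` is a Yetter–Drinfel'd module over `A`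
    (hYD : IsYD actK coactK)
    -- `K` is a `k`-coalgebra
    (hcoassoc : (TensorProduct.assoc k K K K).toLinearMap
        ∘ₗ LinearMap.rTensor K comulK ∘ₗ comulK = LinearMap.lTensor K comulK ∘ₗ comulK)
    (hcounit₁ : (TensorProduct.lid k K).toLinearMap
        ∘ₗ LinearMap.rTensor K counitK ∘ₗ comulK = LinearMap.id)
    (hcounit₂ : (TensorProduct.rid k K).toLinearMap
        ∘ₗ LinearMap.lTensor K counitK ∘ₗ comulK = LinearMap.id)
    -- the unit of `K` is `A`-linear and `A`-colinear
    (hunit_act : ∀ a : A, actK (a ⊗ₜ[k] (1 : K)) = Coalgebra.counit (R := k) a • (1 : K))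
    (hunit_coact : coactK 1 = (1 : A) ⊗ₜ[k] (1 : K))
    -- the counit of `K` is `A`-linear and `A`-colinear
    (hcounit_act : ∀ (a : A) (h : K),
      counitK (actK (a ⊗ₜ[k] h)) = Coalgebra.counit (R := k) a * counitK h)
    (hcounit_coact : ∀ h : K,
      (TensorProduct.rid k A) (LinearMap.lTensor A counitK (coactK h))
        = counitK h • (1 : A))
    -- the multiplication of `K` is `A`-linear and `A`-colinear
    (hmul_act : actK ∘ₗ LinearMap.lTensor A (LinearMap.mul' k K)
        = LinearMap.mul' k K ∘ₗ tAct actK actK)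
    (hmul_coact : coactK ∘ₗ LinearMap.mul' k K
        = LinearMap.lTensor A (LinearMap.mul' k K) ∘ₗ tCoact coactK coactK)
    -- the comultiplication of `K` is `A`-linear and `A`-colinear
    (hcomul_act : comulK ∘ₗ actK = tAct actK actK ∘ₗ LinearMap.lTensor A comulK)
    (hcomul_coact : LinearMap.lTensor A comulK ∘ₗ coactK = tCoact coactK coactK ∘ₗ comulK)
    -- the braided bialgebra axiom `Δ_K(hk) = h₍₁₎ ((h₍₂₎)₍₋₁₎·k₍₁₎) ⊗ (h₍₂₎)₍₀₎ k₍₂₎`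
    (hbraided : comulK ∘ₗ LinearMap.mul' k K
        = LinearMap.lTensor K (LinearMap.mul' k K)
          ∘ₗ (TensorProduct.assoc k K K K).toLinearMap
          ∘ₗ LinearMap.rTensor K (LinearMap.rTensor K (LinearMap.mul' k K))
          ∘ₗ LinearMap.rTensor K (TensorProduct.assoc k K K K).symm.toLinearMap
          ∘ₗ LinearMap.rTensor K (LinearMap.lTensor K (ydBraid coactK actK))
          ∘ₗ LinearMap.rTensor K (TensorProduct.assoc k K K K).toLinearMap
          ∘ₗ (TensorProduct.assoc k (K ⊗[k] K) K K).symm.toLinearMap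
          ∘ₗ TensorProduct.map comulK comulK)
    -- `ε_K` is an algebra map and `Δ_K(1) = 1 ⊗ 1`
    (hcounit_mul : ∀ h h' : K, counitK (h * h') = counitK h * counitK h')
    (hcounit_one : counitK 1 = 1)
    (hcomul_one : comulK 1 = (1 : K) ⊗ₜ[k] (1 : K))
    -- `S_K` is a convolution inverse of the identity of `K`
    (hSK₁ : ∀ h : K, LinearMap.mul' k K (LinearMap.rTensor K SK (comulK h))
        = counitK h • (1 : K))
    (hSK₂ : ∀ h : K, LinearMap.mul' k K (LinearMap.lTensor K SK (comulK h))
        = counitK h • (1 : K)) :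
    -- (1) the smash product multiplication is associative and unital
    (biMul (A := A) (K := K) actK ∘ₗ LinearMap.rTensor (K ⊗[k] A) (biMul actK)
      = biMul actK ∘ₗ LinearMap.lTensor (K ⊗[k] A) (biMul actK)
        ∘ₗ (TensorProduct.assoc k (K ⊗[k] A) (K ⊗[k] A) (K ⊗[k] A)).toLinearMap)
    ∧ (∀ u : K ⊗[k] A,
        biMul actK (((1 : K) ⊗ₜ[k] (1 : A)) ⊗ₜ[k] u) = u
        ∧ biMul actK (u ⊗ₜ[k] ((1 : K) ⊗ₜ[k] (1 : A))) = u)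
    -- (2) the cosmash comultiplication is coassociative and counital
    ∧ ((TensorProduct.assoc k (K ⊗[k] A) (K ⊗[k] A) (K ⊗[k] A)).toLinearMap
        ∘ₗ LinearMap.rTensor (K ⊗[k] A) (biComul comulK coactK) ∘ₗ biComul comulK coactK
      = LinearMap.lTensor (K ⊗[k] A) (biComul comulK coactK) ∘ₗ biComul comulK coactK)
    ∧ ((TensorProduct.lid k (K ⊗[k] A)).toLinearMap
        ∘ₗ LinearMap.rTensor (K ⊗[k] A) (biCounit counitK) ∘ₗ biComul comulK coactK
      = LinearMap.id)
    ∧ ((TensorProduct.rid k (K ⊗[k] A)).toLinearMap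
        ∘ₗ LinearMap.lTensor (K ⊗[k] A) (biCounit counitK) ∘ₗ biComul comulK coactK
      = LinearMap.id)
    -- (3) comultiplication and counit are algebra maps (bialgebra axioms)
    ∧ (biComul comulK coactK ∘ₗ biMul actK
      = TensorProduct.map (biMul actK) (biMul actK)
        ∘ₗ (TensorProduct.tensorTensorTensorComm k
            (K ⊗[k] A) (K ⊗[k] A) (K ⊗[k] A) (K ⊗[k] A)).toLinearMap
        ∘ₗ TensorProduct.map (biComul comulK coactK) (biComul comulK coactK))
    ∧ (biComul comulK coactK ((1 : K) ⊗ₜ[k] (1 : A))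
        = ((1 : K) ⊗ₜ[k] (1 : A)) ⊗ₜ[k] ((1 : K) ⊗ₜ[k] (1 : A)))
    ∧ (∀ u v : (K ⊗[k] A),
        biCounit counitK (biMul actK (u ⊗ₜ[k] v)) = biCounit counitK u * biCounit counitK v)
    ∧ (biCounit counitK ((1 : K) ⊗ₜ[k] (1 : A)) = 1)
    -- (4) the identity map has a convolution inverse: an antipode
    ∧ (∃ S : K ⊗[k] A →ₗ[k] K ⊗[k] A,
        (∀ u : K ⊗[k] A,
          biMul actK (LinearMap.rTensor (K ⊗[k] A) S (biComul comulK coactK u))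
            = biCounit counitK u • ((1 : K) ⊗ₜ[k] (1 : A)))
        ∧ (∀ u : K ⊗[k] A,
          biMul actK (LinearMap.lTensor (K ⊗[k] A) S (biComul comulK coactK u))
            = biCounit counitK u • ((1 : K) ⊗ₜ[k] (1 : A)))) := by
  have H : Radford.IsModAlg actK := ⟨hYD.act_one, hYD.act_mul, hunit_act, hmul_act⟩
  have hy : Radford.Hyps actK coactK comulK counitK :=
    ⟨hYD, hcoassoc, hcounit₁, hcounit₂, hunit_coact, hcounit_act, hcounit_coact, hmul_coact,
      hcomul_act, hcomul_coact, hbraided, hcounit_mul, hcounit_one, hcomul_one⟩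
  refine ⟨?_, ?_, ?_, ?_, ?_, ?_, ?_, ?_, ?_, ?_⟩
  · apply TensorProduct.ext_threefold
    intro u v w
    exact Radford.biMul_assoc H u v w
  · exact fun u => ⟨Radford.biMul_one_left H u, Radford.biMul_one_right H u⟩
  · exact Radford.comulB_coassoc H hy
  · exact Radford.counit_left H hy
  · exact Radford.counit_right H hy
  · apply TensorProduct.ext'
    intro u v
    have h := map_mul (Radford.DeltaB H hy) (Radford.toB H u) (Radford.toB H v)
    rw [Radford.tmul_mul_eq, Radford.mul'_eq_biMul] at h
    have e : ∀ w, Radford.DeltaB H hy w = Radford.comulB H coactK comulK w :=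
      LinearMap.congr_fun (Radford.DeltaB_toLinearMap H hy)
    rw [e, e, e] at h
    exact h
  · have h := map_one (Radford.DeltaB H hy)
    have e := LinearMap.congr_fun (Radford.DeltaB_toLinearMap H hy) 1
    exact e.symm.trans h
  · intro u v
    have h := map_mul (Radford.epsB H hy) (Radford.toB H u) (Radford.toB H v)
    have e : ∀ w, Radford.epsB H hy w = Radford.counitB H counitK w :=
      LinearMap.congr_fun (Radford.epsB_toLinearMap H hy)
    rw [e, e, e] at h
    exact h
  · simp [biCounit, hcounit_one]
  · obtain ⟨S, h1, h2⟩ := Radford.exists_antipode H hy SK hSK₁ hSK₂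
    rw [Radford.mul'_eq_biMul] at h1 h2
    exact ⟨S, h1, h2⟩


end Biproduct

end
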